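/- arXiv:2401.06685 — 2 statements merged into one kernel-verified Lean document; each statement's English description precedes it below -/
import Mathlib

section
/- For all integers k, d ≥ 1 there exists ℓ > 0 such that for every graph G and S,T ⊆ V(G), either there are 2 paths between S and T pairwise at distance at least d, or there is a set X ⊆ V(G) with |X| ≤ 1 such that every S–T path contains a vertex at distance at most ℓ from some member of X. (The coarse Menger conjecture holds for k = 2.) -/
/-- The distance in `G` between vertex sets `A` and `B` is at least `d`:
every walk from `A` to `B` has length at least `d`. -/
def SetDistGE {V : Type} (G : SimpleGraph V) (A B : Set V) (d : ℕ) : Prop :=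
  ∀ ⦃x y : V⦄, x ∈ A → y ∈ B → ∀ w : G.Walk x y, d ≤ w.length

/-- The distance in `G` between `x` and `y` is at most `ℓ`. -/
def DistLE {V : Type} (G : SimpleGraph V) (x y : V) (ℓ : ℕ) : Prop :=
  ∃ w : G.Walk x y, w.length ≤ ℓ

/-- `P` is the vertex set of a path of `G` with one end in `S` and one end in `T`. -/
def IsSTPath {V : Type} (G : SimpleGraph V) (S T : Set V) (P : Set V) : Prop :=
  ∃ (u v : V) (w : G.Walk u v), w.IsPath ∧ u ∈ S ∧ v ∈ T ∧ P = {x | x ∈ w.support}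

/-- There are `k` paths between `S` and `T`, pairwise at distance at least `d`. -/
def HasKPaths {V : Type} (G : SimpleGraph V) (S T : Set V) (k d : ℕ) : Prop :=
  ∃ P : Fin k → Set V, (∀ i, IsSTPath G S T (P i)) ∧
    ∀ i j, i ≠ j → SetDistGE G (P i) (P j) d

/-- There is a set `X` of at most `m` vertices such that every path between `S` and `T`
contains a vertex with distance at most `ℓ` from some member of `X`. -/
def CoarseSeparator {V : Type} (G : SimpleGraph V) (S T : Set V) (m ℓ : ℕ) : Prop :=
  ∃ X : Finset V, X.card ≤ m ∧
    ∀ (u v : V) (w : G.Walk u v), w.IsPath → u ∈ S → v ∈ T →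
      ∃ y ∈ w.support, ∃ x ∈ X, DistLE G x y ℓ

/-!
Let `p` be a shortest `S`–`T` path, and suppose that every ball of radius `410 * d` around a vertex
of `p` is avoided by some `S`–`T` path. Remove the `10 * d`-neighbourhood of `p`, and assign to each
component of the rest the interval of positions along `p` to which it is attached. The detours
around the balls show that these intervals cover `p` with a large margin. A cheapest way of passing
from `S` to `T` through the components, by steps between intervals that overlap or components that
are close together, yields a chain in which nonconsecutive components are far apart.

Group the chain into maximal runs of consecutive components that are joined by short links. Each
run, with its links, is a connected block. The part of `p` bridged by a block, extended at both
ends by a spike to the adjacent blocks, is a rail parallel to the block. A block meets the rails of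
the two neighbouring runs, and otherwise blocks and rails are pairwise far apart; so the two ways of
alternating between blocks and rails from run to run produce the two paths.
-/

section Distance

variable {V : Type} {G : SimpleGraph V} {x y z : V} {A B C D : Set V} {k l : ℕ}

theorem DistLE.refl (x : V) (k : ℕ) : DistLE G x x k := ⟨.nil, Nat.zero_le k⟩

theorem DistLE.symm (h : DistLE G x y k) : DistLE G y x k := by
  obtain ⟨w, hw⟩ := h
  exact ⟨w.reverse, by rwa [SimpleGraph.Walk.length_reverse]⟩

theorem DistLE.mono (h : DistLE G x y k) (hkl : k ≤ l) : DistLE G x y l :=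
  h.imp fun _ hw => hw.trans hkl

theorem DistLE.trans (h : DistLE G x y k) (h' : DistLE G y z l) : DistLE G x z (k + l) := by
  obtain ⟨w, hw⟩ := h
  obtain ⟨w', hw'⟩ := h'
  exact ⟨w.append w', by rw [SimpleGraph.Walk.length_append]; omega⟩

theorem DistLE.of_adj (h : G.Adj x y) : DistLE G x y 1 := ⟨h.toWalk, le_rfl⟩

theorem exists_distLE_of_mem_support (w : G.Walk x y) (hz : z ∈ w.support) :
    ∃ i j, i + j = w.length ∧ DistLE G x z i ∧ DistLE G z y j := by
  classical
  refine ⟨_, _, ?_, ⟨w.takeUntil z hz, le_rfl⟩, ⟨w.dropUntil z hz, le_rfl⟩⟩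
  rw [← SimpleGraph.Walk.length_append, SimpleGraph.Walk.take_spec]

theorem distLE_of_mem_support (w : G.Walk x y) {u v : V} (hu : u ∈ w.support)
    (hv : v ∈ w.support) : DistLE G u v w.length := by
  classical
  have hlength := congrArg SimpleGraph.Walk.length (w.take_spec hu)
  rw [SimpleGraph.Walk.length_append] at hlength
  rw [← w.take_spec hu, SimpleGraph.Walk.mem_support_append_iff] at hv
  rcases hv with hv | hv
  · obtain ⟨i, j, hij, -, hj⟩ := exists_distLE_of_mem_support _ hv
    exact hj.symm.mono (by omega)
  · obtain ⟨i, j, hij, hi, -⟩ := exists_distLE_of_mem_support _ hv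
    exact hi.mono (by omega)

/-- The distance in `G` between the vertex sets `A` and `B` is at most `k`. -/
def SetDistLE (G : SimpleGraph V) (A B : Set V) (k : ℕ) : Prop :=
  ∃ x ∈ A, ∃ y ∈ B, DistLE G x y k

theorem SetDistLE.symm (h : SetDistLE G A B k) : SetDistLE G B A k := by
  obtain ⟨x, hx, y, hy, hxy⟩ := h
  exact ⟨y, hy, x, hx, hxy.symm⟩

theorem SetDistLE.mono (h : SetDistLE G A B k) (hkl : k ≤ l) : SetDistLE G A B l := by
  obtain ⟨x, hx, y, hy, hxy⟩ := h
  exact ⟨x, hx, y, hy, hxy.mono hkl⟩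

theorem SetDistLE.subset (h : SetDistLE G A B k) (hA : A ⊆ C) (hB : B ⊆ D) :
    SetDistLE G C D k := by
  obtain ⟨x, hx, y, hy, hxy⟩ := h
  exact ⟨x, hA hx, y, hB hy, hxy⟩

theorem setDistGE_of_not_setDistLE (h : ¬ SetDistLE G A B k) : SetDistGE G A B k := by
  intro x y hx hy w
  by_contra! hw
  exact h ⟨x, hx, y, hy, w, hw.le⟩

/-- The vertices lying on some walk of length at most `k` between `A` and `B`. -/
def Between (G : SimpleGraph V) (A B : Set V) (k : ℕ) : Set V :=
  {z | ∃ x ∈ A, ∃ y ∈ B, ∃ w : G.Walk x y, w.length ≤ k ∧ z ∈ w.support}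

theorem between_mono (hkl : k ≤ l) : Between G A B k ⊆ Between G A B l := by
  rintro z ⟨x, hx, y, hy, w, hw, hz⟩
  exact ⟨x, hx, y, hy, w, hw.trans hkl, hz⟩

theorem exists_distLE_of_mem_between (hz : z ∈ Between G A B k) :
    ∃ x ∈ A, ∃ y ∈ B, ∃ i j, i + j ≤ k ∧ DistLE G x z i ∧ DistLE G z y j := by
  obtain ⟨x, hx, y, hy, w, hw, hz⟩ := hz
  obtain ⟨i, j, hij, hi, hj⟩ := exists_distLE_of_mem_support w hz
  exact ⟨x, hx, y, hy, i, j, hij.trans_le hw, hi, hj⟩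

end Distance

section Connectivity

variable {V : Type} {G : SimpleGraph V} {S T A B : Set V} {d m : ℕ} {U R : ℕ → Set V}

theorem connected_biUnion_Ico {Y : ℕ → Set V} {a b : ℕ} (hab : a < b)
    (hY : ∀ k ∈ Set.Ico a b, (G.induce (Y k)).Connected)
    (hmeet : ∀ k, a ≤ k → k + 1 < b → (Y k ∩ Y (k + 1)).Nonempty) :
    (G.induce (⋃ k ∈ Set.Ico a b, Y k)).Connected := by
  induction b, hab using Nat.le_induction with
  | base =>
    rw [← Nat.succ_eq_succ, ← Set.insert_Ico_right_eq_Ico_succ le_rfl, Set.Ico_self,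
      insert_empty_eq, Set.biUnion_singleton]
    exact hY a (by simp)
  | succ b hab ih =>
    rw [← Order.succ_eq_add_one, ← Set.insert_Ico_right_eq_Ico_succ (by omega), Set.biUnion_insert,
      Set.union_comm]
    refine SimpleGraph.induce_union_connected
      (ih (fun k hk => hY k ⟨hk.1, hk.2.trans b.lt_succ_self⟩)
        fun k hk hkb => hmeet k hk (by omega)).preconnected
      (hY b ⟨by omega, b.lt_succ_self⟩).preconnected ?_
    have hlast := hmeet (b - 1) (by omega) (by omega)
    rw [Nat.sub_add_cancel (by omega)] at hlast
    exact hlast.mono (Set.inter_subset_inter_left _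
      (Set.subset_biUnion_of_mem (u := Y) (Set.mem_Ico.2 (by omega))))

theorem exists_isSTPath_subset (hA : (G.induce A).Connected) (hS : (A ∩ S).Nonempty)
    (hT : (A ∩ T).Nonempty) : ∃ P ⊆ A, IsSTPath G S T P := by
  obtain ⟨u, huA, hu⟩ := hS
  obtain ⟨v, hvA, hv⟩ := hT
  obtain ⟨w, hw⟩ := hA.exists_isPath ⟨u, huA⟩ ⟨v, hvA⟩
  let incl : G.induce A ↪g G := SimpleGraph.Embedding.induce A
  have hsub : ∀ x ∈ (w.map incl.toHom).support, x ∈ A := by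
    simp only [SimpleGraph.Walk.support_map, List.mem_map]
    rintro _ ⟨a, -, rfl⟩
    exact a.2
  exact ⟨_, hsub, u, v, w.map incl.toHom, hw.map incl.injective, hu, hv, rfl⟩

theorem hasKPaths_two (hA : (G.induce A).Connected) (hB : (G.induce B).Connected)
    (hAS : (A ∩ S).Nonempty) (hAT : (A ∩ T).Nonempty) (hBS : (B ∩ S).Nonempty)
    (hBT : (B ∩ T).Nonempty) (hAB : ¬ SetDistLE G A B d) : HasKPaths G S T 2 d := by
  obtain ⟨P, hPA, hP⟩ := exists_isSTPath_subset hA hAS hAT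
  obtain ⟨Q, hQB, hQ⟩ := exists_isSTPath_subset hB hBS hBT
  have hPQ : ¬ SetDistLE G P Q d := fun h => hAB (h.subset hPA hQB)
  refine ⟨![P, Q], Fin.forall_fin_two.2 ⟨hP, hQ⟩, fun i j hij => ?_⟩
  fin_cases i <;> fin_cases j
  · exact absurd rfl hij
  · exact setDistGE_of_not_setDistLE hPQ
  · exact setDistGE_of_not_setDistLE fun h => hPQ h.symm
  · exact absurd rfl hij

/-- The sequence `U 0, R 1, U 2, R 3, …`. -/
def zigzag (U R : ℕ → Set V) (k : ℕ) : Set V := if Even k then U k else R k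

theorem zigzag_of_even {k : ℕ} (hk : Even k) : zigzag U R k = U k := if_pos hk

theorem zigzag_of_not_even {k : ℕ} (hk : ¬ Even k) : zigzag U R k = R k := if_neg hk

theorem connected_zigzag (hU : ∀ k ≤ m, (G.induce (U k)).Connected)
    (hR : ∀ k ≤ m, (G.induce (R k)).Connected) (hUR : ∀ k < m, (U k ∩ R (k + 1)).Nonempty)
    (hRU : ∀ k < m, (R k ∩ U (k + 1)).Nonempty) :
    (G.induce (⋃ k ∈ Set.Ico 0 (m + 1), zigzag U R k)).Connected := by
  refine connected_biUnion_Ico m.succ_pos (fun k hk => ?_) fun k _ hk => ?_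
  · by_cases heven : Even k
    · rw [zigzag_of_even heven]
      exact hU k (Nat.lt_succ_iff.1 hk.2)
    · rw [zigzag_of_not_even heven]
      exact hR k (Nat.lt_succ_iff.1 hk.2)
  · by_cases heven : Even k
    · rw [zigzag_of_even heven, zigzag_of_not_even (by grind)]
      exact hUR k (by omega)
    · rw [zigzag_of_not_even heven, zigzag_of_even (by grind)]
      exact hRU k (by omega)

theorem hasKPaths_two_of_ladder (hU : ∀ k ≤ m, (G.induce (U k)).Connected)
    (hR : ∀ k ≤ m, (G.induce (R k)).Connected)
    (hUR : ∀ k < m, (U k ∩ R (k + 1)).Nonempty) (hRU : ∀ k < m, (R k ∩ U (k + 1)).Nonempty)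
    (hUS : (U 0 ∩ S).Nonempty) (hRS : (R 0 ∩ S).Nonempty)
    (hUT : (U m ∩ T).Nonempty) (hRT : (R m ∩ T).Nonempty)
    (hUU_far : ∀ k l, k < l → l ≤ m → ¬ SetDistLE G (U k) (U l) d)
    (hRR_far : ∀ k l, k < l → l ≤ m → ¬ SetDistLE G (R k) (R l) d)
    (hUR_far : ∀ k l, k ≤ m → l ≤ m → l ≠ k + 1 → k ≠ l + 1 → ¬ SetDistLE G (U k) (R l) d) :
    HasKPaths G S T 2 d := by
  have hstart : ∀ {U R : ℕ → Set V}, (U 0 ∩ S).Nonempty →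
      ((⋃ k ∈ Set.Ico 0 (m + 1), zigzag U R k) ∩ S).Nonempty := fun ⟨x, hx, hxS⟩ =>
    ⟨x, Set.mem_biUnion (x := 0) (by simp) (by simpa [zigzag] using hx), hxS⟩
  have hend : ∀ {U R : ℕ → Set V}, (U m ∩ T).Nonempty → (R m ∩ T).Nonempty →
      ((⋃ k ∈ Set.Ico 0 (m + 1), zigzag U R k) ∩ T).Nonempty := by
    intro U R hU hR
    have : (zigzag U R m ∩ T).Nonempty := by unfold zigzag; split_ifs <;> assumption
    exact this.mono (Set.inter_subset_inter_left _
      (Set.subset_biUnion_of_mem (u := zigzag U R) (by simp)))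
  refine hasKPaths_two (connected_zigzag hU hR hUR hRU) (connected_zigzag hR hU hRU hUR)
    (hstart hUS) (hend hUT hRT) (hstart hRS) (hend hRT hUT) ?_
  rintro ⟨x, hx, y, hy, hxy⟩
  simp only [Set.mem_iUnion, Set.mem_Ico] at hx hy
  obtain ⟨k, ⟨-, hk⟩, hx⟩ := hx
  obtain ⟨l, ⟨-, hl⟩, hy⟩ := hy
  have hUU : ¬ SetDistLE G (U k) (U l) d ∨ k = l := by
    rcases lt_trichotomy k l with h | h | h
    exacts [.inl (hUU_far k l h (by omega)), .inr h,
      .inl fun h' => hUU_far l k h (by omega) h'.symm]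
  have hRR : ¬ SetDistLE G (R k) (R l) d ∨ k = l := by
    rcases lt_trichotomy k l with h | h | h
    exacts [.inl (hRR_far k l h (by omega)), .inr h,
      .inl fun h' => hRR_far l k h (by omega) h'.symm]
  unfold zigzag at hx hy
  split_ifs at hx hy with hk' hl' hl'
  · exact hUR_far k l (by omega) (by omega) (by grind) (by grind) ⟨x, hx, y, hy, hxy⟩
  · exact hUU.elim (fun h => h ⟨x, hx, y, hy, hxy⟩) (by grind)
  · exact hRR.elim (fun h => h ⟨x, hx, y, hy, hxy⟩) (by grind)
  · exact hUR_far l k (by omega) (by omega) (by grind) (by grind) ⟨y, hy, x, hx, hxy.symm⟩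

end Connectivity

section OptimalChain

variable {ι : Type*} {start goal : ι → Prop} {strong step : ι → ι → Prop} {v w : ι} {k : ℕ}

/-- `HasCost start strong step v k`: the point `v` can be reached from a starting point at total
cost `k`, where a strong link costs `2` and any other step costs `3`. -/
inductive HasCost (start : ι → Prop) (strong step : ι → ι → Prop) : ι → ℕ → Prop
  | start {v : ι} : start v → HasCost start strong step v 0
  | strong {v w : ι} {k : ℕ} :
    HasCost start strong step v k → strong v w → HasCost start strong step w (k + 2)
  | step {v w : ι} {k : ℕ} :
    HasCost start strong step v k → step v w → HasCost start strong step w (k + 3)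

theorem exists_hasCost_of_reflTransGen (h : Relation.ReflTransGen step v w) (hv : start v) :
    ∃ k, HasCost start strong step w k := by
  induction h with
  | refl => exact ⟨0, .start hv⟩
  | tail _ hstep ih => exact ih.elim fun k hk => ⟨k + 3, hk.step hstep⟩

/-- The chain `c 1, …, c q` is a cheapest way of reaching `c q`: the least cost of `c i` is `κ i`,
and every link accounts exactly for the difference of the costs of its ends. -/
structure IsTightChain (start : ι → Prop) (strong step : ι → ι → Prop) (c : ℕ → ι) (κ : ℕ → ℕ)
    (q : ℕ) : Prop where
  pos : 0 < q
  start_one : start (c 1)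
  isLeast : ∀ i, 0 < i → i ≤ q → IsLeast {k | HasCost start strong step (c i) k} (κ i)
  tight : ∀ i, 0 < i → i < q → strong (c i) (c (i + 1)) ∧ κ (i + 1) = κ i + 2 ∨
    step (c i) (c (i + 1)) ∧ κ (i + 1) = κ i + 3

theorem IsTightChain.snoc {c : ℕ → ι} {κ : ℕ → ℕ} {q : ℕ}
    (h : IsTightChain start strong step c κ q)
    (hw : IsLeast {l | HasCost start strong step w l} k)
    (hlink : strong (c q) w ∧ k = κ q + 2 ∨ step (c q) w ∧ k = κ q + 3) :
    IsTightChain start strong step (Function.update c (q + 1) w) (Function.update κ (q + 1) k)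
      (q + 1) := by
  have hc : ∀ i ≤ q, Function.update c (q + 1) w i = c i := fun i hi =>
    Function.update_of_ne (by omega) _ _
  have hκ : ∀ i ≤ q, Function.update κ (q + 1) k i = κ i := fun i hi =>
    Function.update_of_ne (by omega) _ _
  refine ⟨q.succ_pos, ?_, fun i hi hiq => ?_, fun i hi hiq => ?_⟩
  · rw [hc 1 h.pos]
    exact h.start_one
  · rcases hiq.lt_or_eq with hlt | rfl
    · rw [hc i (by omega), hκ i (by omega)]
      exact h.isLeast i hi (by omega)
    · simpa only [Function.update_self] using hw
  · rw [hc i (by omega), hκ i (by omega)]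
    rcases (Nat.lt_succ_iff.1 hiq).lt_or_eq with hlt | rfl
    · rw [hc (i + 1) hlt, hκ (i + 1) hlt]
      exact h.tight i hi hlt
    · simpa only [Function.update_self] using hlink

theorem HasCost.exists_isTightChain (h : HasCost start strong step v k)
    (hmin : ∀ l, HasCost start strong step v l → k ≤ l) :
    ∃ c κ q, IsTightChain start strong step c κ q ∧ c q = v ∧ κ q = k := by
  induction h with
  | @start v hv =>
    exact ⟨fun _ => v, fun _ => 0, 1,
      ⟨one_pos, hv, fun _ _ _ => ⟨.start hv, fun _ _ => Nat.zero_le _⟩,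
        fun _ _ _ => by omega⟩, rfl, rfl⟩
  | @strong v w k hv hvw ih =>
    obtain ⟨c, κ, q, hc, rfl, rfl⟩ := ih fun l hl => by have := hmin _ (hl.strong hvw); omega
    exact ⟨_, _, q + 1, hc.snoc ⟨hv.strong hvw, fun l hl => hmin l hl⟩ (.inl ⟨hvw, rfl⟩),
      Function.update_self .., Function.update_self ..⟩
  | @step v w k hv hvw ih =>
    obtain ⟨c, κ, q, hc, rfl, rfl⟩ := ih fun l hl => by have := hmin _ (hl.step hvw); omega
    exact ⟨_, _, q + 1, hc.snoc ⟨hv.step hvw, fun l hl => hmin l hl⟩ (.inr ⟨hvw, rfl⟩),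
      Function.update_self .., Function.update_self ..⟩

theorem IsTightChain.add_two_mul_le {c : ℕ → ι} {κ : ℕ → ℕ} {q i j : ℕ}
    (h : IsTightChain start strong step c κ q) (hi : 0 < i) (hij : i ≤ j) (hj : j ≤ q) :
    κ i + 2 * (j - i) ≤ κ j := by
  induction j, hij using Nat.le_induction with
  | base => omega
  | succ j hij ih =>
    have := ih (by omega)
    rcases h.tight j (by omega) hj with ⟨-, hκ⟩ | ⟨-, hκ⟩ <;> omega

/-- A chain of steps `c 1, …, c q` from a starting point to a goal which meets the starting points
and the goals only at its ends, which no single step shortens, and in which two consecutive steps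
are both strong whenever a detour with two strong links could replace them. -/
structure IsOptimalChain (start goal : ι → Prop) (strong step : ι → ι → Prop) (c : ℕ → ι)
    (q : ℕ) : Prop where
  pos : 0 < q
  start_one : start (c 1)
  goal_last : goal (c q)
  not_start : ∀ i, 1 < i → i ≤ q → ¬ start (c i)
  not_goal : ∀ i, 0 < i → i < q → ¬ goal (c i)
  step_succ : ∀ i, 0 < i → i < q → step (c i) (c (i + 1))
  not_step : ∀ i j, 0 < i → i + 2 ≤ j → j ≤ q → ¬ step (c i) (c j)
  strong_of_detour : ∀ i, 0 < i → i + 2 ≤ q → ∀ x, strong (c i) x → strong x (c (i + 2)) →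
    strong (c i) (c (i + 1)) ∧ strong (c (i + 1)) (c (i + 2))

theorem exists_isOptimalChain (hstrong : ∀ v w, strong v w → step v w)
    (hgoal : ∃ v w, start v ∧ Relation.ReflTransGen step v w ∧ goal w) :
    ∃ c q, IsOptimalChain start goal strong step c q := by
  classical
  have hex : ∃ k v, goal v ∧ HasCost start strong step v k := by
    obtain ⟨v, w, hv, hvw, hw⟩ := hgoal
    exact (exists_hasCost_of_reflTransGen hvw hv).imp fun k hk => ⟨w, hw, hk⟩
  obtain ⟨v, hv, hcost⟩ := Nat.find_spec hex
  have hmin : ∀ w l, goal w → HasCost start strong step w l → Nat.find hex ≤ l :=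
    fun w l hw hl => Nat.find_min' hex ⟨w, hw, hl⟩
  obtain ⟨c, κ, q, hc, rfl, hκq⟩ := hcost.exists_isTightChain fun l => hmin _ l hv
  have hκ_le : ∀ {i l}, 0 < i → i ≤ q → HasCost start strong step (c i) l → κ i ≤ l :=
    fun hi hiq hl => (hc.isLeast _ hi hiq).2 hl
  have hcostκ : ∀ i, 0 < i → i ≤ q → HasCost start strong step (c i) (κ i) :=
    fun i hi hiq => (hc.isLeast i hi hiq).1
  refine ⟨c, q, hc.pos, hc.start_one, hv, fun i hi hiq hstart => ?_, fun i hi hiq hgi => ?_,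
    fun i hi hiq => ?_, fun i j hi hij hj hstep => ?_, fun i hi hiq x hix hxi => ?_⟩
  · have := hκ_le (by omega) hiq (.start hstart)
    have := hc.add_two_mul_le one_pos hi.le hiq
    omega
  · have := hmin _ _ hgi (hcostκ i hi hiq.le)
    have := hc.add_two_mul_le hi hiq.le le_rfl
    omega
  · exact (hc.tight i hi hiq).elim (fun h => hstrong _ _ h.1) fun h => h.1
  · have := hκ_le (by omega) hj ((hcostκ i hi (by omega)).step hstep)
    have := hc.add_two_mul_le hi (by omega : i ≤ j) hj
    omega
  · have := hκ_le (by omega) hiq (((hcostκ i hi (by omega)).strong hix).strong hxi)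
    have htight : strong (c (i + 1)) (c (i + 2)) ∧ κ (i + 2) = κ (i + 1) + 2 ∨
      step (c (i + 1)) (c (i + 2)) ∧ κ (i + 2) = κ (i + 1) + 3 := hc.tight (i + 1) i.succ_pos hiq
    rcases hc.tight i hi (by omega) with ⟨h₁, hκ₁⟩ | ⟨-, hκ₁⟩ <;>
    rcases htight with ⟨h₂, hκ₂⟩ | ⟨-, hκ₂⟩
    · exact ⟨h₁, h₂⟩
    all_goals omega

end OptimalChain

section IntervalChain

variable {ι : Type*} {α β : ι → ℕ} {close : ι → ι → Prop} {a b : ℕ → ℕ} {near : ℕ → ℕ → Prop}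
  {n M K Q q i j : ℕ}

/-- The intervals `[α v, β v]` cover `[M, n + M]` with margin `M`; the only endpoints allowed
outside of `[M, n + M]` are `0` on the left and `n + 2 * M` on the right. -/
structure IsMarginCover (α β : ι → ℕ) (n M : ℕ) : Prop where
  left_eq_or_le : ∀ v, α v = 0 ∨ M ≤ α v
  right_le_or_eq : ∀ v, β v ≤ n + M ∨ β v = n + 2 * M
  cover : ∀ x, M ≤ x → x ≤ n + M → ∃ v, α v + M ≤ x ∧ x + M ≤ β v

/-- The intervals `[a i, b i]`, for `1 ≤ i ≤ q`, proceed from `0` to `n + 2 * M` in such a way that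
consecutive ones overlap in length `K` or are near to each other, and nonconsecutive ones do
neither. Moreover `[a i, b i]` and `[a (i + 2), b (i + 2)]` are far apart, or both have a large
overlap with `[a (i + 1), b (i + 1)]`. The values `b 0` and `a (q + 1)` are the ends of
`[M, n + M]`. -/
structure IsIntervalChain (a b : ℕ → ℕ) (near : ℕ → ℕ → Prop) (n M K Q q : ℕ) : Prop where
  pos : 0 < q
  left_one : a 1 = 0
  left_last : a (q + 1) = n + M
  right_zero : b 0 = M
  right_last : b q = n + 2 * M
  le_left : ∀ i, 1 < i → i ≤ q → M ≤ a i
  right_le : ∀ i < q, b i ≤ n + M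
  two_mul_le_right : ∀ i, 0 < i → i ≤ q → 2 * M ≤ b i
  left_succ_le : ∀ i, 0 < i → i < q → a (i + 1) ≤ b i + K
  overlap_or_near : ∀ i, 0 < i → i < q → a (i + 1) + K ≤ b i ∨ near i (i + 1)
  right_lt_left_add : ∀ i j, 0 < i → i + 2 ≤ j → j ≤ q → b i < a j + K
  not_near : ∀ i j, 0 < i → i + 2 ≤ j → j ≤ q → ¬ near i j
  far_or_overlap : ∀ i, 0 < i → i + 2 ≤ q →
    b i + Q < a (i + 2) ∨ a (i + 1) + Q ≤ b i ∧ a (i + 2) + Q ≤ b (i + 1)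

theorem IsIntervalChain.le_right (h : IsIntervalChain a b near n M K Q q) (hi : i ≤ q) :
    M ≤ b i := by
  rcases i.eq_zero_or_pos with rfl | hpos
  · exact h.right_zero.ge
  · have := h.two_mul_le_right i hpos hi
    omega

theorem IsIntervalChain.right_add_lt (h : IsIntervalChain a b near n M K Q q) (hQM : Q < M)
    (hKQ : K ≤ Q) (hij : i < j) (hj : j ≤ q) : b i + Q < b j + K := by
  have hsucc : ∀ i < q, b i + Q < b (i + 1) + K := by
    intro i hi
    have := h.two_mul_le_right (i + 1) i.succ_pos hi
    have := h.right_zero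
    have := h.right_le i hi
    rcases Nat.eq_zero_or_pos i with rfl | hpos
    · omega
    rcases Nat.lt_or_ge (i + 1) q with hlt | hge
    · have : a (i + 2) ≤ b (i + 1) + K := h.left_succ_le (i + 1) i.succ_pos hlt
      have := h.right_lt_left_add i (i + 2) hpos le_rfl hlt
      rcases h.far_or_overlap i hpos hlt with hfar | ⟨-, hoverlap⟩ <;> omega
    · obtain rfl : q = i + 1 := by omega
      have := h.right_last
      omega
  induction j, hij using Nat.le_induction with
  | base => exact hsucc i hj
  | succ j _ ih =>
    have := ih (by omega)
    have := hsucc j hj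
    omega

theorem IsIntervalChain.left_add_lt (h : IsIntervalChain a b near n M K Q q) (hKQ : K ≤ Q)
    (hi : 1 < i) (hij : i < j) (hj : j ≤ q) : a i + Q < a j + K := by
  have hsucc : ∀ i, 0 < i → i + 1 < q → a (i + 1) + Q < a (i + 2) + K := by
    intro i hi hiq
    have := h.left_succ_le i hi (by omega)
    have := h.right_lt_left_add i (i + 2) hi le_rfl hiq
    rcases h.far_or_overlap i hi hiq with hfar | ⟨hoverlap, -⟩ <;> omega
  obtain ⟨i, rfl⟩ : ∃ k, i = k + 1 := ⟨i - 1, by omega⟩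
  induction j, hij using Nat.le_induction with
  | base => exact hsucc i (by omega) hj
  | succ j hij ih =>
    obtain ⟨j, rfl⟩ : ∃ k, j = k + 1 := ⟨j - 1, by omega⟩
    have := ih (by omega)
    have := hsucc j (by omega) hj
    change _ < a (j + 2) + K
    omega

theorem IsIntervalChain.right_add_lt_left_add (h : IsIntervalChain a b near n M K Q q)
    (hQM : Q < M) (hKQ : K ≤ Q) (hij : i + 3 ≤ j) (hj : j ≤ q + 1) :
    b i + Q < a j + 2 * K := by
  have hright := h.right_add_lt hQM hKQ (i.lt_add_one) (by omega)
  rcases hj.lt_or_eq with hlt | rfl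
  · have := h.right_lt_left_add (i + 1) j i.succ_pos (by omega) (by omega)
    omega
  · have := h.right_le (i + 1) (by omega)
    have := h.left_last
    omega

theorem IsMarginCover.exists_reflTransGen (h : IsMarginCover α β n M) (hQ : 0 < Q)
    (hQM : 2 * Q ≤ M) :
    ∃ v w, (α v = 0 ∧ 2 * M ≤ β v) ∧
      Relation.ReflTransGen (fun v w => α w + Q ≤ β v) v w ∧ n + M < β w := by
  obtain ⟨v, hαv, hβv⟩ := h.cover M le_rfl (by omega)
  have hex : ∀ m, ∃ w, Relation.ReflTransGen (fun v w => α w + Q ≤ β v) v w ∧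
      (m ≤ β w ∨ n + M < β w) ∧ M ≤ β w := by
    intro m
    induction m with
    | zero => exact ⟨v, .refl, .inl (Nat.zero_le _), by omega⟩
    | succ m ih =>
      obtain ⟨w, hvw, hw, hM⟩ := ih
      by_cases hgoal : n + M < β w
      · exact ⟨w, hvw, .inr hgoal, hM⟩
      · obtain ⟨x, hαx, hβx⟩ := h.cover (β w) hM (by omega)
        exact ⟨x, hvw.tail (by omega), by omega, by omega⟩
  obtain ⟨w, hvw, hw, -⟩ := hex (n + M + 1)
  exact ⟨v, w, ⟨by have := h.left_eq_or_le v; omega, by omega⟩, hvw, by omega⟩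

/-- The chain minimises the cost of getting from left to right, where an overlap of length `Q` is
cheaper than a weaker link, but two links cost more than one. -/
theorem IsMarginCover.exists_isOptimalChain (h : IsMarginCover α β n M) (hQ : 0 < Q) (hKQ : K ≤ Q)
    (hQM : 2 * Q ≤ M) :
    ∃ c q, IsOptimalChain (fun v => α v = 0 ∧ 2 * M ≤ β v) (fun v => n + M < β v)
      (fun v w => α w + Q ≤ β v) (fun v w => α w + K ≤ β v ∨ close v w) c q := by
  have hstrong : ∀ v w, α w + Q ≤ β v → α w + K ≤ β v ∨ close v w := fun v w hvw => .inl (by omega)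
  obtain ⟨v, w, hv, hvw, hw⟩ := h.exists_reflTransGen hQ hQM
  exact _root_.exists_isOptimalChain hstrong ⟨v, w, hv, hvw.lift id hstrong, hw⟩

section OfIsOptimalChain

variable {c : ℕ → ι}

theorem IsMarginCover.far_or_overlap (h : IsMarginCover α β n M) (hQM : 2 * Q ≤ M)
    (hc : IsOptimalChain (fun v => α v = 0 ∧ 2 * M ≤ β v) (fun v => n + M < β v)
      (fun v w => α w + Q ≤ β v) (fun v w => α w + K ≤ β v ∨ close v w) c q)
    (hi : 0 < i) (hiq : i + 2 ≤ q) (hM : M ≤ β (c i)) :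
    β (c i) + Q < α (c (i + 2)) ∨
      α (c (i + 1)) + Q ≤ β (c i) ∧ α (c (i + 2)) + Q ≤ β (c (i + 1)) := by
  by_contra! hcon
  obtain ⟨x, hαx, hβx⟩ := h.cover (β (c i)) hM (not_lt.1 (hc.not_goal i hi (by omega)))
  have : α (c (i + 1)) + Q ≤ β (c i) ∧ α (c (i + 2)) + Q ≤ β (c (i + 1)) :=
    hc.strong_of_detour i hi hiq x (by omega) (by omega)
  omega

theorem IsMarginCover.two_mul_le_right (h : IsMarginCover α β n M)
    (hclose : ∀ v w, close v w → α w ≤ β v + K) (hKQ : K ≤ Q) (hQM : 2 * Q ≤ M)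
    (hc : IsOptimalChain (fun v => α v = 0 ∧ 2 * M ≤ β v) (fun v => n + M < β v)
      (fun v w => α w + Q ≤ β v) (fun v w => α w + K ≤ β v ∨ close v w) c q)
    (hi : 0 < i) (hiq : i ≤ q) : 2 * M ≤ β (c i) := by
  induction i, hi using Nat.le_induction with
  | base => exact hc.start_one.2
  | succ i hi ih =>
    have hM := ih (by omega)
    rcases hiq.lt_or_eq with hlt | heq
    · have hnot : ¬ α (c (i + 2)) + K ≤ β (c i) := fun hle =>
        hc.not_step i (i + 2) hi le_rfl hlt (.inl hle)
      have : α (c (i + 2)) ≤ β (c (i + 1)) + K :=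
        (hc.step_succ (i + 1) i.succ_pos hlt).elim
          (fun hle => (Nat.le_add_right _ K).trans (hle.trans (Nat.le_add_right _ K))) (hclose _ _)
      rcases h.far_or_overlap hQM hc hi hlt (by omega) with hfar | hoverlap <;> omega
    · have hgoal : n + M < β (c (i + 1)) := heq ▸ hc.goal_last
      have := h.right_le_or_eq (c (i + 1))
      omega

theorem IsMarginCover.isIntervalChain (h : IsMarginCover α β n M)
    (hclose : ∀ v w, close v w → α w ≤ β v + K) (hKQ : K ≤ Q) (hQM : 2 * Q ≤ M)
    (hc : IsOptimalChain (fun v => α v = 0 ∧ 2 * M ≤ β v) (fun v => n + M < β v)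
      (fun v w => α w + Q ≤ β v) (fun v w => α w + K ≤ β v ∨ close v w) c q)
    (hα : ∀ i, 0 < i → i ≤ q → α (c i) = a i) (hβ : ∀ i, 0 < i → i ≤ q → β (c i) = b i)
    (ha : a (q + 1) = n + M) (hb : b 0 = M) :
    IsIntervalChain a b (fun i j => close (c i) (c j)) n M K Q q := by
  have hpos := hc.pos
  have htwo_mul : ∀ i, 0 < i → i ≤ q → 2 * M ≤ b i := fun i hi hiq =>
    (h.two_mul_le_right hclose hKQ hQM hc hi hiq).trans_eq (hβ i hi hiq)
  have hstep : ∀ i, 0 < i → i < q → a (i + 1) + K ≤ b i ∨ close (c i) (c (i + 1)) := by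
    intro i hi hiq
    rw [← hα (i + 1) i.succ_pos hiq, ← hβ i hi hiq.le]
    exact hc.step_succ i hi hiq
  have hnot_step : ∀ i j, 0 < i → i + 2 ≤ j → j ≤ q → ¬ (a j + K ≤ b i ∨ close (c i) (c j)) := by
    intro i j hi hij hj
    rw [← hα j (by omega) hj, ← hβ i hi (by omega)]
    exact hc.not_step i j hi hij hj
  refine ⟨hpos, ?_, ha, hb, ?_, fun i hi hiq => ?_, fun i hiq => ?_, htwo_mul, fun i hi hiq => ?_,
    hstep, fun i j hi hij hj => ?_, fun i j hi hij hj hij' => hnot_step i j hi hij hj (.inr hij'),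
    fun i hi hiq => ?_⟩
  · exact (hα 1 one_pos hpos).symm.trans hc.start_one.1
  · exact (hβ q hpos le_rfl).symm.trans ((h.right_le_or_eq (c q)).resolve_left hc.goal_last.not_ge)
  · rw [← hα i (by omega) hiq]
    exact (h.left_eq_or_le (c i)).resolve_left fun h0 => hc.not_start i hi hiq
      ⟨h0, h.two_mul_le_right hclose hKQ hQM hc (by omega) hiq⟩
  · rcases i.eq_zero_or_pos with rfl | hi
    · omega
    · exact (hβ i hi hiq.le).symm.trans_le (not_lt.1 (hc.not_goal i hi hiq))
  · refine (hstep i hi hiq).elim (fun _ => by omega) fun hle => ?_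
    rw [← hα (i + 1) i.succ_pos hiq, ← hβ i hi hiq.le]
    exact hclose _ _ hle
  · exact not_le.1 fun hle => hnot_step i j hi hij hj (.inl hle)
  · have := htwo_mul i hi (by omega)
    rw [← hα _ (i + 1).succ_pos hiq, ← hα (i + 1) i.succ_pos (by omega),
      ← hβ (i + 1) i.succ_pos (by omega), ← hβ i hi (by omega)]
    exact h.far_or_overlap hQM hc hi hiq (by rw [hβ i hi (by omega)]; omega)

end OfIsOptimalChain

theorem IsMarginCover.exists_isIntervalChain (h : IsMarginCover α β n M)
    (hclose : ∀ v w, close v w → α w ≤ β v + K) (hQ : 0 < Q) (hKQ : K ≤ Q) (hQM : 2 * Q ≤ M) :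
    ∃ (c : ℕ → ι) (a b : ℕ → ℕ) (q : ℕ), (∀ i, 0 < i → i ≤ q → α (c i) = a i ∧ β (c i) = b i) ∧
      IsIntervalChain a b (fun i j => close (c i) (c j)) n M K Q q := by
  obtain ⟨c, q, hc⟩ := h.exists_isOptimalChain (close := close) hQ hKQ hQM
  have hα : ∀ i, 0 < i → i ≤ q → α (c i) = if i ≤ q then α (c i) else n + M :=
    fun i _ hi => (if_pos hi).symm
  have hβ : ∀ i, 0 < i → i ≤ q → β (c i) = if i = 0 then M else β (c i) :=
    fun i hi _ => (if_neg hi.ne').symm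
  exact ⟨c, _, _, q, fun i hi hiq => ⟨hα i hi hiq, hβ i hi hiq⟩,
    h.isIntervalChain hclose hKQ hQM hc hα hβ (if_neg (by omega)) (if_pos rfl)⟩

end IntervalChain

section Geodesic

variable {V : Type} {G : SimpleGraph V} {S T X Y : Set V} {p : ℕ → V} {x : V}
  {n s t k l d lo hi lo' hi' : ℕ}

/-- `p 0, …, p n` is a shortest walk between `S` and `T`. -/
structure IsSTGeodesic (G : SimpleGraph V) (S T : Set V) (p : ℕ → V) (n : ℕ) : Prop where
  zero_mem : p 0 ∈ S
  last_mem : p n ∈ T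
  adj : ∀ t < n, G.Adj (p t) (p (t + 1))
  le_of_distLE : ∀ u ∈ S, ∀ v ∈ T, ∀ k, DistLE G u v k → n ≤ k

theorem exists_isSTGeodesic (h : SetDistLE G S T k) : ∃ p n, IsSTGeodesic G S T p n := by
  classical
  have hex : ∃ k, SetDistLE G S T k := ⟨k, h⟩
  have hmin : ∀ u ∈ S, ∀ v ∈ T, ∀ k, DistLE G u v k → Nat.find hex ≤ k := fun u hu v hv k huv =>
    Nat.find_min' hex ⟨u, hu, v, hv, huv⟩
  obtain ⟨u, hu, v, hv, w, hw⟩ := Nat.find_spec hex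
  have hlength : w.length = Nat.find hex := hw.antisymm (hmin u hu v hv _ ⟨w, le_rfl⟩)
  rw [← hlength] at hmin
  exact ⟨w.getVert, w.length, by rwa [w.getVert_zero], by rwa [w.getVert_length],
    fun t ht => w.adj_getVert_succ ht, hmin⟩

theorem IsSTGeodesic.distLE (hp : IsSTGeodesic G S T p n) (hst : s ≤ t) (ht : t ≤ n) :
    DistLE G (p s) (p t) (t - s) := by
  induction t, hst using Nat.le_induction with
  | base => exact DistLE.refl _ _
  | succ t hst ih =>
    exact ((ih (by omega)).trans (DistLE.of_adj (hp.adj t ht))).mono (by omega)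

theorem IsSTGeodesic.le_of_mem_left (hp : IsSTGeodesic G S T p n) (hx : x ∈ S) (ht : t ≤ n)
    (h : DistLE G x (p t) k) : t ≤ k := by
  have := hp.le_of_distLE x hx _ hp.last_mem _ (h.trans (hp.distLE ht le_rfl))
  omega

theorem IsSTGeodesic.le_of_mem_right (hp : IsSTGeodesic G S T p n) (hx : x ∈ T) (ht : t ≤ n)
    (h : DistLE G x (p t) k) : n ≤ t + k :=
  hp.le_of_distLE _ hp.zero_mem x hx _ ((hp.distLE t.zero_le ht).trans h.symm)

theorem IsSTGeodesic.le_add (hp : IsSTGeodesic G S T p n) (ht : t ≤ n)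
    (h : DistLE G (p s) (p t) k) : t ≤ s + k := by
  rcases le_total s n with hs | hs
  · exact hp.le_of_mem_left hp.zero_mem ht ((hp.distLE s.zero_le hs).trans h)
  · omega

/-- The vertices at distance at most `k` from `p t` for some `t ∈ [lo, hi]`. -/
def pathNbhd (G : SimpleGraph V) (p : ℕ → V) (lo hi k : ℕ) : Set V :=
  {x | ∃ t, lo ≤ t ∧ t ≤ hi ∧ DistLE G x (p t) k}

theorem pathNbhd_mono (hlo : lo' ≤ lo) (hhi : hi ≤ hi') (hkl : k ≤ l) :
    pathNbhd G p lo hi k ⊆ pathNbhd G p lo' hi' l := by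
  rintro x ⟨t, ht, ht', hx⟩
  exact ⟨t, hlo.trans ht, ht'.trans hhi, hx.mono hkl⟩

theorem IsSTGeodesic.not_setDistLE (hp : IsSTGeodesic G S T p n)
    (hX : X ⊆ pathNbhd G p lo hi k) (hY : Y ⊆ pathNbhd G p lo' hi' l) (hn : hi' ≤ n)
    (hfar : hi + k + l + d < lo') : ¬ SetDistLE G X Y d := by
  rintro ⟨x, hx, y, hy, hxy⟩
  obtain ⟨s, -, hs, hxs⟩ := hX hx
  obtain ⟨t, ht, htn, hyt⟩ := hY hy
  have := hp.le_add (htn.trans hn) ((hxs.symm.trans hxy).trans hyt)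
  omega

theorem IsSTGeodesic.connected_segment (hp : IsSTGeodesic G S T p n) (hlo : lo ≤ hi)
    (hhi : hi ≤ n) : (G.induce (p '' Set.Icc lo hi)).Connected := by
  induction hi, hlo using Nat.le_induction with
  | base =>
    rw [Set.Icc_self, Set.image_singleton]
    exact SimpleGraph.Connected.of_subsingleton
  | succ hi hlo ih =>
    rw [← Order.succ_eq_add_one, ← Set.insert_Icc_right_eq_Icc_succ (hlo.trans (Order.le_succ hi)),
      Set.image_insert_eq, Set.insert_eq, Set.union_comm]
    exact SimpleGraph.connected_induce_union (ih (Nat.le_of_succ_le hhi)).preconnected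
      (.of_subsingleton) (Set.mem_image_of_mem p ⟨hlo, le_rfl⟩) rfl (hp.adj hi hhi)

end Geodesic

section Components

variable {V : Type} {G : SimpleGraph V} {K S T A : Set V} {p : ℕ → V} {u v x y z : V}
  {n r M F i t : ℕ}

theorem connected_induce_componentCompl (C : G.ComponentCompl K) :
    (G.induce (C : Set V)).Connected := by
  let f : C.toSimpleGraph →g G.induce (C : Set V) := ⟨fun v => ⟨v.1.1, v.1.2, v.2⟩, fun h => h⟩
  exact C.connected_toSimpleGraph.map f fun v => ⟨⟨⟨v.1, v.2.choose⟩, v.2.choose_spec⟩, rfl⟩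

theorem exists_adj_of_mem_componentCompl (w : G.Walk x y) {C : G.ComponentCompl K} (hx : x ∈ C)
    (hy : y ∉ C) : ∃ u ∈ C, ∃ v ∈ w.support, v ∈ K ∧ G.Adj u v := by
  obtain ⟨a, ha, hfst, hsnd⟩ := w.exists_boundary_dart (C : Set V) hx hy
  refine ⟨a.fst, hfst, a.snd, w.dart_snd_mem_support_of_mem_darts ha, ?_, a.adj⟩
  by_contra hK
  exact hsnd (SimpleGraph.ComponentCompl.mem_of_adj _ _ hfst hK a.adj)

/-- The positions at which `A` is attached to the path `p 0, …, p n`: the vertex `p t` has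
position `t + M`, while contact with `S` and `T` is recorded by the extremal positions `0` and
`n + 2 * M`. -/
def attachments (G : SimpleGraph V) (S T : Set V) (p : ℕ → V) (n r M : ℕ) (A : Set V) : Set ℕ :=
  {x | x = 0 ∧ (A ∩ S).Nonempty ∨ x = n + 2 * M ∧ (A ∩ T).Nonempty ∨
    ∃ t ≤ n, x = t + M ∧ SetDistLE G A {p t} (r + 1)}

theorem le_of_mem_attachments {x : ℕ} (hx : x ∈ attachments G S T p n r M A) : x ≤ n + 2 * M := by
  rcases hx with ⟨rfl, -⟩ | ⟨rfl, -⟩ | ⟨t, ht, rfl, -⟩ <;> omega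

theorem bddAbove_attachments : BddAbove (attachments G S T p n r M A) :=
  ⟨n + 2 * M, fun _ => le_of_mem_attachments⟩

theorem add_mem_attachments_of_adj (hu : u ∈ A) (huv : G.Adj u v) (ht : t ≤ n)
    (hv : DistLE G v (p t) r) : t + M ∈ attachments G S T p n r M A :=
  .inr (.inr ⟨t, ht, rfl, u, hu, _, rfl, ((DistLE.of_adj huv).trans hv).mono (by omega)⟩)

/-- The vertices that are, according to their position along the path, to the left of `p i` by
at least `M`; a component counts as soon as one of its attachments does. -/
def leftSide (G : SimpleGraph V) (S T : Set V) (p : ℕ → V) (n r M i : ℕ) : Set V :=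
  {v | (∃ t, t + M ≤ i ∧ DistLE G v (p t) r) ∨ ∃ C : G.ComponentCompl (pathNbhd G p 0 n r),
    v ∈ C ∧ ∃ a ∈ attachments G S T p n r M C, a ≤ i}

theorem IsSTGeodesic.lt_or_lt_of_not_distLE (hp : IsSTGeodesic G S T p n) (hi : i ≤ n)
    (ht : t ≤ n) (hv : DistLE G v (p t) r) (hfar : ¬ DistLE G (p i) v (r + M)) :
    t + M < i ∨ i + M < t := by
  by_contra! hcon
  apply hfar
  rcases le_total t i with hti | hit
  · exact (hv.trans (hp.distLE hti hi)).symm.mono (by omega)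
  · exact ((hp.distLE hit ht).trans hv.symm).mono (by omega)

theorem IsSTGeodesic.mem_leftSide (hp : IsSTGeodesic G S T p n) (hrM : r < M) (hi : i ≤ n)
    (hu : u ∈ S) (hfar : ¬ DistLE G (p i) u (r + M)) : u ∈ leftSide G S T p n r M i := by
  by_cases hK : u ∈ pathNbhd G p 0 n r
  · obtain ⟨t, -, ht, hut⟩ := hK
    have := hp.le_of_mem_left hu ht hut
    have := hp.lt_or_lt_of_not_distLE hi ht hut hfar
    exact .inl ⟨t, by omega, hut⟩
  · exact .inr ⟨_, G.componentComplMk_mem hK, 0,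
      .inl ⟨rfl, u, G.componentComplMk_mem hK, hu⟩, i.zero_le⟩

theorem IsSTGeodesic.exists_attachment_of_mem_leftSide (hp : IsSTGeodesic G S T p n) (hrM : r < M)
    (hi : i ≤ n) (hv : v ∈ T) (hleft : v ∈ leftSide G S T p n r M i) :
    ∃ C : G.ComponentCompl (pathNbhd G p 0 n r), ∃ a ∈ attachments G S T p n r M C,
      ∃ b ∈ attachments G S T p n r M C, a ≤ i ∧ i + 2 * M ≤ b := by
  rcases hleft with ⟨t, ht, hvt⟩ | ⟨C, hC, a, ha, hai⟩
  · have := hp.le_of_mem_right hv (by omega) hvt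
    omega
  · exact ⟨C, a, ha, n + 2 * M, .inr (.inl ⟨rfl, v, hC, hv⟩), hai, by omega⟩

theorem IsSTGeodesic.exists_attachment_of_adj (hp : IsSTGeodesic G S T p n) (hrM : r < M)
    (hi : i ≤ n) (huv : G.Adj u v) (hu : u ∈ leftSide G S T p n r M i)
    (hv : v ∉ leftSide G S T p n r M i) (hfar : ¬ DistLE G (p i) v (r + M)) :
    ∃ C : G.ComponentCompl (pathNbhd G p 0 n r), ∃ a ∈ attachments G S T p n r M C,
      ∃ b ∈ attachments G S T p n r M C, a ≤ i ∧ i + 2 * M ≤ b := by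
  by_cases hK : v ∈ pathNbhd G p 0 n r
  · obtain ⟨s, -, hs, hvs⟩ := hK
    have hs_right : i + M < s := (hp.lt_or_lt_of_not_distLE hi hs hvs hfar).resolve_left
      fun hlt => hv (.inl ⟨s, hlt.le, hvs⟩)
    rcases hu with ⟨t, ht, hut⟩ | ⟨C, hC, a, ha, hai⟩
    · have := hp.le_add hs ((hut.symm.trans (.of_adj huv)).trans hvs)
      omega
    · exact ⟨C, a, ha, s + M, add_mem_attachments_of_adj hC huv hs hvs, hai, by omega⟩
  · refine absurd (.inr ?_) hv
    rcases hu with ⟨t, ht, hut⟩ | ⟨C, hC, a, ha, hai⟩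
    · exact ⟨_, G.componentComplMk_mem hK, t + M, add_mem_attachments_of_adj
        (G.componentComplMk_mem hK) huv.symm (by omega) hut, ht⟩
    · exact ⟨C, SimpleGraph.ComponentCompl.mem_of_adj u v hC hK huv, a, ha, hai⟩

theorem IsSTGeodesic.exists_attachment_of_walk (hp : IsSTGeodesic G S T p n) (hrM : r < M)
    (hi : i ≤ n) (hu : u ∈ S) (hv : v ∈ T) (w : G.Walk u v)
    (hfar : ∀ y ∈ w.support, ¬ DistLE G (p i) y (r + M)) :
    ∃ C : G.ComponentCompl (pathNbhd G p 0 n r), ∃ a ∈ attachments G S T p n r M C,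
      ∃ b ∈ attachments G S T p n r M C, a ≤ i ∧ i + 2 * M ≤ b := by
  have hu_left := hp.mem_leftSide hrM hi hu (hfar u w.start_mem_support)
  by_cases hv_left : v ∈ leftSide G S T p n r M i
  · exact hp.exists_attachment_of_mem_leftSide hrM hi hv hv_left
  · obtain ⟨e, he, hfst, hsnd⟩ := w.exists_boundary_dart _ hu_left hv_left
    exact hp.exists_attachment_of_adj hrM hi e.adj hfst hsnd
      (hfar _ (w.dart_snd_mem_support_of_mem_darts he))

theorem exists_attachment_of_walk_between {C : G.ComponentCompl (pathNbhd G p 0 n r)}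
    (w : G.Walk x y) (hx : x ∈ C) (hy : y ∉ C) :
    ∃ z ∈ w.support, ∃ s ≤ n, s + M ∈ attachments G S T p n r M C ∧ DistLE G z (p s) r := by
  obtain ⟨u, hu, z, hz, ⟨s, -, hs, hzs⟩, huz⟩ := exists_adj_of_mem_componentCompl w hx hy
  exact ⟨z, hz, s, hs, add_mem_attachments_of_adj hu huz hs hzs, hzs⟩

theorem IsSTGeodesic.exists_attachment_of_mem_between (hp : IsSTGeodesic G S T p n)
    {C C' : G.ComponentCompl (pathNbhd G p 0 n r)} (hne : C ≠ C') (hz : z ∈ Between G C C' F) :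
    ∃ s t, s ≤ n ∧ s + M ∈ attachments G S T p n r M C ∧ t + M ∈ attachments G S T p n r M C' ∧
      t ≤ s + 2 * (r + F) ∧ DistLE G z (p s) (r + F) := by
  obtain ⟨x, hx, y, hy, w, hF, hz⟩ := hz
  have hdisj := SimpleGraph.ComponentCompl.pairwise_disjoint hne
  obtain ⟨x', hx', s, hs, hsC, hxs⟩ := exists_attachment_of_walk_between (S := S) (T := T) (M := M)
    w hx (Set.disjoint_right.1 hdisj hy)
  obtain ⟨y', hy', t, ht, htC', hyt⟩ := exists_attachment_of_walk_between (S := S) (T := T) (M := M)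
    w.reverse hy (Set.disjoint_left.1 hdisj hx)
  rw [SimpleGraph.Walk.support_reverse, List.mem_reverse] at hy'
  have hst := hp.le_add ht ((hxs.symm.trans (distLE_of_mem_support w hx' hy')).trans hyt)
  exact ⟨s, t, hs, hsC, htC', by omega,
    ((distLE_of_mem_support w hz hx').trans hxs).mono (by omega)⟩

theorem IsSTGeodesic.sInf_attachments_le (hp : IsSTGeodesic G S T p n)
    {C C' : G.ComponentCompl (pathNbhd G p 0 n r)} (h : SetDistLE G C C' F) :
    sInf (attachments G S T p n r M C) ≤
      sSup (attachments G S T p n r M C') + 2 * (r + F) := by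
  rcases eq_or_ne C' C with rfl | hne
  · refine le_add_right ?_
    rcases (attachments G S T p n r M C').eq_empty_or_nonempty with hempty | hnonempty
    · rw [hempty, Nat.sInf_empty]
      exact Nat.zero_le _
    · exact le_csSup bddAbove_attachments (Nat.sInf_mem hnonempty)
  · obtain ⟨x, hx, y, hy, w, hw⟩ := h.symm
    obtain ⟨s, t, -, hs, ht, hts, -⟩ := hp.exists_attachment_of_mem_between (M := M) hne
      ⟨x, hx, y, hy, w, hw, w.start_mem_support⟩
    have := Nat.sInf_le ht
    have := le_csSup bddAbove_attachments hs
    omega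

end Components

section Spikes

variable {V : Type} {G : SimpleGraph V} {S T A B C : Set V} {p : ℕ → V} {x z : V}
  {n r M F d k t : ℕ}

theorem between_comm : Between G A B k = Between G B A k := by
  have hsub : ∀ A B : Set V, Between G A B k ⊆ Between G B A k := by
    rintro A B z ⟨x, hx, y, hy, w, hw, hz⟩
    exact ⟨y, hy, x, hx, w.reverse, by rwa [w.length_reverse], by
      rwa [w.support_reverse, List.mem_reverse]⟩
  exact (hsub A B).antisymm (hsub B A)

theorem between_empty_left : Between G ∅ B k = ∅ := by
  rw [Set.eq_empty_iff_forall_notMem]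
  rintro z ⟨x, hx, -⟩
  exact hx

theorem between_empty_right : Between G A ∅ k = ∅ := by
  rw [between_comm, between_empty_left]

theorem subset_between_self (A : Set V) : A ⊆ Between G A A 0 := fun x hx =>
  ⟨x, hx, x, hx, .nil, le_rfl, SimpleGraph.Walk.start_mem_support _⟩

theorem inter_between_nonempty (h : SetDistLE G A B k) : (A ∩ Between G A B k).Nonempty := by
  obtain ⟨x, hx, y, hy, w, hw⟩ := h
  exact ⟨x, hx, x, hx, y, hy, w, hw, w.start_mem_support⟩

theorem setDistLE_of_mem_between (hz : z ∈ Between G A B k) : SetDistLE G A B k := by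
  obtain ⟨x, hx, y, hy, w, hw, -⟩ := hz
  exact ⟨x, hx, y, hy, w, hw⟩

theorem exists_distLE_half_of_mem_between (hz : z ∈ Between G A B k) :
    ∃ x ∈ A ∪ B, DistLE G x z (k / 2) := by
  obtain ⟨x, hx, y, hy, i, j, hij, hi, hj⟩ := exists_distLE_of_mem_between hz
  rcases le_total i j with hle | hle
  · exact ⟨x, .inl hx, hi.mono (by omega)⟩
  · exact ⟨y, .inr hy, hj.symm.mono (by omega)⟩

theorem connected_union_between (hA : (G.induce A).Connected) (hBA : B ⊆ A) :
    (G.induce (A ∪ Between G B C k)).Connected := by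
  obtain ⟨u, hu⟩ := hA.nonempty
  refine SimpleGraph.induce_connected_of_patches u (.inl hu) ?_
  rintro v (hv | ⟨x, hx, y, hy, w, hw, hv⟩)
  · exact ⟨A, Set.subset_union_left, hu, hv, hA.preconnected _ _⟩
  · have hsub : {z | z ∈ w.support} ⊆ Between G B C k := fun z hz => ⟨x, hx, y, hy, w, hw, hz⟩
    exact ⟨A ∪ {z | z ∈ w.support}, Set.union_subset_union_right _ hsub, .inl hu, .inr hv,
      (SimpleGraph.induce_union_connected hA.preconnected w.connected_induce_support.preconnected
        ⟨x, hBA hx, w.start_mem_support⟩).preconnected _ _⟩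

theorem between_singleton_subset_pathNbhd :
    Between G {p t} A k ⊆ pathNbhd G p t t k := by
  intro z hz
  obtain ⟨_, rfl, y, -, i, j, hij, hi, -⟩ := exists_distLE_of_mem_between hz
  exact ⟨t, le_rfl, le_rfl, hi.symm.mono (by omega)⟩

theorem lt_of_disjoint_pathNbhd (hA : Disjoint (pathNbhd G p 0 n r) A) (hx : x ∈ A) (ht : t ≤ n)
    (h : DistLE G x (p t) k) : r < k := by
  by_contra! hk
  exact Set.disjoint_right.1 hA hx ⟨t, t.zero_le, ht, h.mono hk⟩

/-- Along a walk of length `r + 1` from `p t` to `A`, a vertex at distance `m` from `B`, which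
avoids the `r`-neighbourhood of `p`, is at distance at most `m` from `A`. -/
theorem setDistLE_of_setDistLE_between_singleton (hB : Disjoint (pathNbhd G p 0 n r) B)
    (ht : t ≤ n) (h : SetDistLE G (Between G {p t} A (r + 1)) (Between G B C F) d) :
    SetDistLE G A C (F + 2 * d) := by
  obtain ⟨x, hx, z, hz, hxz⟩ := h
  obtain ⟨_, rfl, u, hu, i, j, hij, hi, hj⟩ := exists_distLE_of_mem_between hx
  obtain ⟨v, hv, w, hw, i', j', hij', hi', hj'⟩ := exists_distLE_of_mem_between hz
  have := lt_of_disjoint_pathNbhd hB hv ht ((hi'.trans hxz.symm).trans hi.symm)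
  exact ⟨u, hu, w, hw, ((hj.symm.trans hxz).trans hj').mono (by omega)⟩

theorem inter_nonempty_of_zero_mem_attachments (hM : 0 < M)
    (h : 0 ∈ attachments G S T p n r M A) : (A ∩ S).Nonempty := by
  rcases h with ⟨-, h⟩ | ⟨h, -⟩ | ⟨t, -, h, -⟩
  · exact h
  all_goals omega

theorem inter_nonempty_of_last_mem_attachments (hM : 0 < M)
    (h : n + 2 * M ∈ attachments G S T p n r M A) : (A ∩ T).Nonempty := by
  rcases h with ⟨h, -⟩ | ⟨-, h⟩ | ⟨t, ht, h, -⟩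
  · omega
  · exact h
  · omega

theorem setDistLE_of_mem_attachments (hM : 0 < M) (h : t ∈ attachments G S T p n r M A)
    (hMt : M ≤ t) (ht : t ≤ n + M) : SetDistLE G A {p (t - M)} (r + 1) := by
  rcases h with ⟨h, -⟩ | ⟨h, -⟩ | ⟨t, -, rfl, h⟩
  · omega
  · omega
  · rwa [Nat.add_sub_cancel]

end Spikes

section ComponentChain

variable {V : Type} {G : SimpleGraph V} {S T A : Set V} {p : ℕ → V} {C : ℕ → Set V} {a b : ℕ → ℕ}
  {n d q i j t x y z : ℕ}

/-- Sets `C 1, …, C q`, playing the role of components of the complement of the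
`10 * d`-neighbourhood of a geodesic `p`, whose intervals of attachments `[a i, b i]` lead from `S`
to `T`. All other `C i` are empty. -/
structure IsComponentChain (G : SimpleGraph V) (S T : Set V) (p : ℕ → V) (n d : ℕ)
    (C : ℕ → Set V) (a b : ℕ → ℕ) (q : ℕ) : Prop where
  geodesic : IsSTGeodesic G S T p n
  pos : 0 < d
  intervals : IsIntervalChain a b (fun i j => SetDistLE G (C i) (C j) (8 * d)) n (400 * d) (40 * d)
    (200 * d) q
  connected : ∀ i, 0 < i → i ≤ q → (G.induce (C i)).Connected
  eq_empty : ∀ i, i = 0 ∨ q < i → C i = ∅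
  disjoint : ∀ i, Disjoint (pathNbhd G p 0 n (10 * d)) (C i)
  left_mem : ∀ i, 0 < i → i ≤ q → a i ∈ attachments G S T p n (10 * d) (400 * d) (C i)
  right_mem : ∀ i, 0 < i → i ≤ q → b i ∈ attachments G S T p n (10 * d) (400 * d) (C i)
  between_subset : ∀ i, 0 < i → i < q → Between G (C i) (C (i + 1)) (8 * d) ⊆
    pathNbhd G p (a (i + 1) - 436 * d) (b i - 400 * d) (18 * d)

/-- The vertices near `C i` and `C (i + 1)` through which these two sets are joined. The smaller
radius in case of a large overlap of the intervals keeps such a link away from a set near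
`C (i + 2)` or `C (i - 1)`. -/
def link (G : SimpleGraph V) (d : ℕ) (C : ℕ → Set V) (a b : ℕ → ℕ) (i : ℕ) : Set V :=
  Between G (C i) (C (i + 1)) (if a (i + 1) + 200 * d ≤ b i then 6 * d else 8 * d)

/-- The set `C i` together with its link to `C (i + 1)`. -/
def piece (G : SimpleGraph V) (d : ℕ) (C : ℕ → Set V) (a b : ℕ → ℕ) (i : ℕ) : Set V :=
  C i ∪ link G d C a b i

/-- There is no link between `C x` and `C (x + 1)`. -/
def IsCut (G : SimpleGraph V) (d : ℕ) (C : ℕ → Set V) (a b : ℕ → ℕ) (x : ℕ) : Prop :=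
  link G d C a b x = ∅

/-- The vertices on the walks of length at most `10 * d + 1` from `p t` to `A`. -/
def spike (G : SimpleGraph V) (p : ℕ → V) (d t : ℕ) (A : Set V) : Set V :=
  Between G {p t} A (10 * d + 1)

theorem between_subset_link : Between G (C i) (C (i + 1)) (6 * d) ⊆ link G d C a b i :=
  between_mono (by split_ifs <;> omega)

theorem link_subset_between : link G d C a b i ⊆ Between G (C i) (C (i + 1)) (8 * d) :=
  between_mono (by split_ifs <;> omega)

theorem exists_distLE_of_mem_link {v : V} (hv : v ∈ link G d C a b i) :
    ∃ u ∈ C i ∪ C (i + 1), DistLE G u v (4 * d) := by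
  obtain ⟨u, hu, huv⟩ := exists_distLE_half_of_mem_between (link_subset_between hv)
  exact ⟨u, hu, huv.mono (by omega)⟩

theorem exists_distLE_of_mem_piece {v : V} (hv : v ∈ piece G d C a b i) :
    ∃ j, ∃ u ∈ C j, DistLE G u v (4 * d) := by
  rcases hv with hv | hv
  · exact ⟨i, v, hv, DistLE.refl _ _⟩
  · obtain ⟨u, hu | hu, huv⟩ := exists_distLE_of_mem_link hv
    exacts [⟨i, u, hu, huv⟩, ⟨i + 1, u, hu, huv⟩]

theorem not_isCut_of_setDistLE_link {k : ℕ} (hle : SetDistLE G (link G d C a b i) A k) :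
    ¬ IsCut G d C a b i := fun hcut => by
  obtain ⟨u, hu, -⟩ := hle
  exact (hcut ▸ hu : u ∈ (∅ : Set V)).elim

namespace IsComponentChain

variable (h : IsComponentChain G S T p n d C a b q)
include h

theorem pos_and_lt_of_not_isCut (hi : ¬ IsCut G d C a b i) : 0 < i ∧ i < q := by
  by_contra! hcon
  apply hi
  unfold IsCut link
  rcases i.eq_zero_or_pos with rfl | hpos
  · rw [h.eq_empty 0 (.inl rfl), between_empty_left]
  · rw [h.eq_empty (i + 1) (.inr (by have := hcon hpos; omega)), between_empty_right]

theorem isCut_of_le (hi : q ≤ i) : IsCut G d C a b i := by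
  by_contra hcut
  have := h.pos_and_lt_of_not_isCut hcut
  omega

theorem isCut_zero : IsCut G d C a b 0 := by
  by_contra hcut
  exact (h.pos_and_lt_of_not_isCut hcut).1.false

theorem link_subset_pathNbhd : link G d C a b i ⊆
    pathNbhd G p (a (i + 1) - 436 * d) (b i - 400 * d) (18 * d) := by
  intro v hv
  obtain ⟨hi, hiq⟩ := h.pos_and_lt_of_not_isCut fun hcut => (hcut ▸ hv : v ∈ (∅ : Set V)).elim
  exact h.between_subset i hi hiq (link_subset_between hv)

theorem not_setDistLE_of_isCut (hz : IsCut G d C a b z) (hi : i ≤ z) (hj : z < j) :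
    ¬ SetDistLE G (C i) (C j) (6 * d) := by
  intro hij
  rcases i.eq_zero_or_pos with rfl | hpos
  · obtain ⟨u, hu, -⟩ := hij
    rwa [h.eq_empty 0 (.inl rfl)] at hu
  rcases lt_or_ge q j with hq | hq
  · obtain ⟨-, -, u, hu, -⟩ := hij
    rwa [h.eq_empty j (.inr hq)] at hu
  rcases (by omega : i + 2 ≤ j ∨ i = z ∧ j = z + 1) with hlt | ⟨rfl, rfl⟩
  · exact h.intervals.not_near i j hpos hlt hq (hij.mono (by omega))
  · exact ((inter_between_nonempty hij).mono (Set.inter_subset_right.trans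
      between_subset_link)).ne_empty hz

theorem left_add_le_of_isCut (hx : IsCut G d C a b x) (hpos : 0 < x) (hxq : x < q) :
    a (x + 1) + 40 * d ≤ b x := by
  by_cases hoverlap : a (x + 1) + 200 * d ≤ b x
  · omega
  · refine (h.intervals.overlap_or_near x hpos hxq).resolve_right fun hnear => ?_
    rw [IsCut, link, if_neg hoverlap] at hx
    exact (inter_between_nonempty hnear).right.ne_empty hx

theorem not_setDistLE_link_link (hi : i + 2 ≤ j) :
    ¬ SetDistLE G (link G d C a b i) (link G d C a b j) d := by
  intro hle
  have hjq := (h.pos_and_lt_of_not_isCut (not_isCut_of_setDistLE_link hle.symm)).2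
  have := h.intervals.right_le j hjq
  have := h.intervals.le_right (by omega : i ≤ q)
  have := h.intervals.right_add_lt_left_add (by have := h.pos; omega) (by omega)
    (by omega : i + 3 ≤ j + 1) (by omega)
  exact h.geodesic.not_setDistLE h.link_subset_pathNbhd h.link_subset_pathNbhd (by omega)
    (by omega) hle

theorem not_setDistLE_component_link (hz : IsCut G d C a b z) (hij : i ≤ z ∧ z < j) :
    ¬ SetDistLE G (C i) (link G d C a b j) d := by
  rintro ⟨u, hu, v, hv, huv⟩
  obtain ⟨w, hw | hw, hwv⟩ := exists_distLE_of_mem_link hv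
  · exact h.not_setDistLE_of_isCut hz hij.1 hij.2
      ⟨u, hu, w, hw, (huv.trans hwv.symm).mono (by omega)⟩
  · exact h.not_setDistLE_of_isCut hz hij.1 (by omega : z < j + 1)
      ⟨u, hu, w, hw, (huv.trans hwv.symm).mono (by omega)⟩

theorem not_setDistLE_link_component (hz : IsCut G d C a b z) (hij : i < z ∧ z < j) :
    ¬ SetDistLE G (link G d C a b i) (C j) d := by
  rintro ⟨u, hu, v, hv, huv⟩
  obtain ⟨w, hw | hw, hwu⟩ := exists_distLE_of_mem_link hu
  · exact h.not_setDistLE_of_isCut hz hij.1.le hij.2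
      ⟨w, hw, v, hv, (hwu.trans huv).mono (by omega)⟩
  · exact h.not_setDistLE_of_isCut hz (by omega : i + 1 ≤ z) hij.2
      ⟨w, hw, v, hv, (hwu.trans huv).mono (by omega)⟩

theorem not_setDistLE_piece_piece (hz : IsCut G d C a b z) (hi : i ≤ z) (hj : z < j) :
    ¬ SetDistLE G (piece G d C a b i) (piece G d C a b j) d := by
  have hlink : (link G d C a b i).Nonempty → i < z := by
    rintro hne
    exact hi.lt_of_ne fun hiz => hne.ne_empty (hiz ▸ hz)
  rintro ⟨u, hu | hu, v, hv | hv, huv⟩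
  · exact h.not_setDistLE_of_isCut hz hi hj ⟨u, hu, v, hv, huv.mono (by have := h.pos; omega)⟩
  · exact h.not_setDistLE_component_link hz ⟨hi, hj⟩ ⟨u, hu, v, hv, huv⟩
  · exact h.not_setDistLE_link_component hz ⟨hlink ⟨u, hu⟩, hj⟩ ⟨u, hu, v, hv, huv⟩
  · have := hlink ⟨u, hu⟩
    exact h.not_setDistLE_link_link (by omega) ⟨u, hu, v, hv, huv⟩

theorem not_setDistLE_component_spike (ht : t ≤ n) (hz : IsCut G d C a b z)
    (hij : i ≤ z ∧ z < j ∨ j ≤ z ∧ z < i) : ¬ SetDistLE G (C i) (spike G p d t (C j)) d := by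
  intro hle
  have hclose := (setDistLE_of_setDistLE_between_singleton (h.disjoint i) ht
    (hle.symm.subset subset_rfl (subset_between_self _))).mono (by omega : _ ≤ 6 * d)
  rcases hij with hij | hij
  · exact h.not_setDistLE_of_isCut hz hij.1 hij.2 hclose.symm
  · exact h.not_setDistLE_of_isCut hz hij.1 hij.2 hclose

theorem not_setDistLE_piece_segment {X : Set V} (hX : X ⊆ p '' Set.Icc 0 n) :
    ¬ SetDistLE G (piece G d C a b i) X d := by
  rintro ⟨u, hu, v, hv, huv⟩
  obtain ⟨t, ht, rfl⟩ := hX hv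
  obtain ⟨j, w, hw, hwu⟩ := exists_distLE_of_mem_piece hu
  have := lt_of_disjoint_pathNbhd (h.disjoint j) hw ht.2 (hwu.trans huv)
  omega

theorem start_le (hx : x < q) : b x - 400 * d ≤ n := by
  have := h.intervals.right_le x hx
  omega

theorem end_le (hy : IsCut G d C a b y) (hpos : 0 < y) (hyq : y ≤ q) :
    a (y + 1) - 400 * d ≤ n := by
  rcases hyq.lt_or_eq with hlt | rfl
  · have := h.left_add_le_of_isCut hy hpos hlt
    have := h.intervals.right_le y hlt
    omega
  · have := h.intervals.left_last
    omega

theorem not_setDistLE_link_spike_of_right_lt (ht : t ≤ n) (hfar : b i - 400 * d + 30 * d < t) :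
    ¬ SetDistLE G (link G d C a b i) (spike G p d t A) d :=
  h.geodesic.not_setDistLE h.link_subset_pathNbhd between_singleton_subset_pathNbhd ht
    (by have := h.pos; omega)

theorem not_setDistLE_link_spike_of_lt_left (hfar : t + 466 * d < a (i + 1)) :
    ¬ SetDistLE G (link G d C a b i) (spike G p d t A) d := by
  intro hle
  have hiq := (h.pos_and_lt_of_not_isCut (not_isCut_of_setDistLE_link hle)).2
  have := h.intervals.right_le i hiq
  have := h.pos
  exact h.geodesic.not_setDistLE between_singleton_subset_pathNbhd h.link_subset_pathNbhd
    (by omega) (by omega) hle.symm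

/-- If the spike starts at the end of the interval of `C (i - 1)`, then the latter is far from the
interval of `C (i + 1)`, or the link is short and would bring `C (i - 1)` near to `C (i + 1)`. -/
theorem not_setDistLE_link_start_spike (hx : x < q) (hix : i ≠ x) :
    ¬ SetDistLE G (link G d C a b i) (spike G p d (b x - 400 * d) (C x)) d := by
  intro hle
  obtain ⟨hi, hiq⟩ := h.pos_and_lt_of_not_isCut (not_isCut_of_setDistLE_link hle)
  have hpos := h.pos
  have hn := h.start_le hx
  have hbx := h.intervals.le_right hx.le
  have hbi := h.intervals.le_right hiq.le
  rcases (by omega : i < x ∨ i = x + 1 ∨ x + 3 ≤ i + 1) with hlt | rfl | hlt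
  · have := h.intervals.right_add_lt (by omega) (by omega) hlt hx.le
    exact h.not_setDistLE_link_spike_of_right_lt hn (by omega) hle
  · rcases x.eq_zero_or_pos with rfl | hx_pos
    · obtain ⟨-, -, u, hu, -⟩ := hle
      rw [spike, h.eq_empty 0 (.inl rfl), between_empty_right] at hu
      exact hu
    rcases h.intervals.far_or_overlap x hx_pos hiq with hfar | ⟨-, hoverlap⟩
    · exact h.not_setDistLE_link_spike_of_lt_left (show _ < a (x + 2) by omega) hle
    · rw [link, if_pos hoverlap] at hle
      exact h.intervals.not_near x (x + 2) hx_pos le_rfl hiq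
        ((setDistLE_of_setDistLE_between_singleton (h.disjoint _) hn hle.symm).mono (by omega))
  · have := h.intervals.right_add_lt_left_add (by omega) (by omega) hlt (by omega)
    exact h.not_setDistLE_link_spike_of_lt_left (by omega) hle

theorem not_setDistLE_link_end_spike (hy : IsCut G d C a b y) (hpos : 0 < y) (hyq : y < q)
    (hiy : i ≠ y + 1) :
    ¬ SetDistLE G (link G d C a b i) (spike G p d (a (y + 1) - 400 * d) (C (y + 1))) d := by
  intro hle
  have hcut := not_isCut_of_setDistLE_link hle
  obtain ⟨hi, hiq⟩ := h.pos_and_lt_of_not_isCut hcut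
  have hd := h.pos
  have hn := h.end_le hy hpos hyq.le
  have hbi := h.intervals.le_right hiq.le
  have hay := h.intervals.le_left (y + 1) (by omega) hyq
  have hne : i ≠ y := fun heq => hcut (heq ▸ hy)
  rcases (by omega : y + 1 < i + 1 ∨ y = i + 1 ∨ i + 3 ≤ y + 1) with hlt | rfl | hlt
  · have := h.intervals.left_add_lt (by omega) (by omega : 1 < y + 1) hlt hiq
    exact h.not_setDistLE_link_spike_of_lt_left (by omega) hle
  · rcases h.intervals.far_or_overlap i hi hyq with hfar | ⟨hoverlap, -⟩
    · exact h.not_setDistLE_link_spike_of_right_lt hn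
        (show _ < a (i + 2) - 400 * d by omega) hle
    · rw [link, if_pos hoverlap, between_comm] at hle
      exact h.intervals.not_near i (i + 2) hi le_rfl hyq
        ((setDistLE_of_setDistLE_between_singleton (h.disjoint _) hn hle.symm).symm.mono
          (by omega))
  · have := h.intervals.right_add_lt_left_add (by omega) (by omega) hlt (by omega)
    exact h.not_setDistLE_link_spike_of_right_lt hn (by omega) hle

end IsComponentChain

end ComponentChain

section Ladder

variable {V : Type} {G : SimpleGraph V} {S T A : Set V} {p : ℕ → V} {C : ℕ → Set V} {a b : ℕ → ℕ}
  {n d q i j k x y x' y' z : ℕ} {s : ℕ → ℕ}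

/-- The union of the pieces with indices `x + 1, …, y`. -/
def block (G : SimpleGraph V) (d : ℕ) (C : ℕ → Set V) (a b : ℕ → ℕ) (x y : ℕ) : Set V :=
  ⋃ i ∈ Set.Ico (x + 1) (y + 1), piece G d C a b i

/-- A connection along the path `p` from `C x` to `C (y + 1)`, by which the block from `x` to `y`
can be bypassed. For `x = 0` it starts at the first vertex of the path, and for `y = q` it ends at
the last one. -/
def rail (G : SimpleGraph V) (p : ℕ → V) (d : ℕ) (C : ℕ → Set V) (a b : ℕ → ℕ) (x y : ℕ) : Set V :=
  p '' Set.uIcc (b x - 400 * d) (a (y + 1) - 400 * d) ∪ spike G p d (b x - 400 * d) (C x) ∪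
    spike G p d (a (y + 1) - 400 * d) (C (y + 1))

theorem subset_block (hx : x < i) (hy : i ≤ y) : C i ⊆ block G d C a b x y :=
  Set.subset_union_left.trans
    (Set.subset_biUnion_of_mem (u := piece G d C a b) (Set.mem_Ico.2 (by omega)))

theorem setDistLE_block_left (hle : SetDistLE G (block G d C a b x y) A k) :
    ∃ i, x < i ∧ i ≤ y ∧ SetDistLE G (piece G d C a b i) A k := by
  obtain ⟨u, hu, v, hv, huv⟩ := hle
  simp only [block, Set.mem_iUnion] at hu
  obtain ⟨i, hi, hu⟩ := hu
  exact ⟨i, hi.1, Nat.lt_succ_iff.1 hi.2, u, hu, v, hv, huv⟩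

theorem rail_subset_pathNbhd : rail G p d C a b x y ⊆
    pathNbhd G p ((b x - 400 * d) ⊓ (a (y + 1) - 400 * d))
      ((b x - 400 * d) ⊔ (a (y + 1) - 400 * d)) (10 * d + 1) := by
  refine Set.union_subset (Set.union_subset ?_ ?_) ?_
  · rintro _ ⟨t, ht, rfl⟩
    exact ⟨t, ht.1, ht.2, DistLE.refl _ _⟩
  · exact between_singleton_subset_pathNbhd.trans (pathNbhd_mono inf_le_left le_sup_left le_rfl)
  · exact between_singleton_subset_pathNbhd.trans (pathNbhd_mono inf_le_right le_sup_right le_rfl)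

theorem exists_strictMono_enumeration {P : ℕ → Prop} (h0 : P 0) (hq : 0 < q)
    (hP : ∀ z, q ≤ z → P z) :
    ∃ (s : ℕ → ℕ) (m : ℕ), StrictMono s ∧ s 0 = 0 ∧ s (m + 1) = q ∧ (∀ k, P (s k)) ∧
      ∀ k z, s k < z → z < s (k + 1) → ¬ P z := by
  classical
  have hinf : {z | P z}.Infinite := (Set.Ici_infinite q).mono fun z hz => hP z hz
  have hcount : 0 < Nat.count P q := (Nat.zero_le _).trans_lt (Nat.count_strict_mono h0 hq)
  have hmono : StrictMono (Nat.nth P) := Nat.nth_strictMono hinf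
  refine ⟨Nat.nth P, Nat.count P q - 1, hmono, Nat.nth_zero_of_zero h0, ?_,
    Nat.nth_mem_of_infinite hinf, fun k z hkz hzk hz => ?_⟩
  · rw [Nat.sub_add_cancel hcount, Nat.nth_count (hP q le_rfl)]
  · rw [← Nat.nth_count hz, hmono.lt_iff_lt] at hkz hzk
    omega

namespace IsComponentChain

variable (h : IsComponentChain G S T p n d C a b q)
include h

theorem connected_block (hxy : x < y) (hy : y ≤ q)
    (hcut : ∀ z, x < z → z < y → ¬ IsCut G d C a b z) :
    (G.induce (block G d C a b x y)).Connected := by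
  refine connected_biUnion_Ico (by omega) (fun k hk => ?_) fun k hxk hky => ?_
  · exact connected_union_between (h.connected k (Nat.zero_lt_of_lt hk.1) (by have := hk.2; omega))
      subset_rfl
  · obtain ⟨v, hv⟩ := Set.nonempty_iff_ne_empty.2 (hcut k hxk (by omega))
    have hmeet := (inter_between_nonempty (setDistLE_of_mem_between hv).symm)
    rw [between_comm] at hmeet
    exact hmeet.imp fun u hu => ⟨.inr hu.2, .inl hu.1⟩

theorem segment_subset (hx : x < q) (hy : IsCut G d C a b y) (hpos : 0 < y) (hyq : y ≤ q) :
    p '' Set.uIcc (b x - 400 * d) (a (y + 1) - 400 * d) ⊆ p '' Set.Icc 0 n :=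
  Set.image_mono (Set.Icc_subset_Icc (Nat.zero_le _)
    (sup_le (h.start_le hx) (h.end_le hy hpos hyq)))

theorem connected_rail (hx : x < q) (hy : IsCut G d C a b y) (hpos : 0 < y) (hyq : y ≤ q) :
    (G.induce (rail G p d C a b x y)).Connected := by
  refine connected_union_between (connected_union_between (h.geodesic.connected_segment inf_le_sup
    (sup_le (h.start_le hx) (h.end_le hy hpos hyq))) ?_) (Set.Subset.trans ?_ Set.subset_union_left)
  · exact Set.singleton_subset_iff.2 (Set.mem_image_of_mem p Set.left_mem_uIcc)
  · exact Set.singleton_subset_iff.2 (Set.mem_image_of_mem p Set.right_mem_uIcc)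

theorem right_mono (hij : i ≤ j) (hj : j ≤ q) : b i ≤ b j := by
  rcases hij.lt_or_eq with hlt | rfl
  · have := h.pos
    have := h.intervals.right_add_lt (by omega) (by omega) hlt hj
    omega
  · rfl

theorem left_succ_add_lt (hx : IsCut G d C a b x) (hpos : 0 < x) (hxy : x < y) (hyq : y ≤ q) :
    a (x + 1) + 30 * d < a (y + 1) := by
  have := h.pos
  rcases hyq.lt_or_eq with hlt | rfl
  · have := h.intervals.left_add_lt (by omega) (by omega : 1 < x + 1) (by omega : x + 1 < y + 1) hlt
    omega
  · have := h.left_add_le_of_isCut hx hpos hxy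
    have := h.intervals.right_le x hxy
    have := h.intervals.left_last
    omega

theorem not_setDistLE_rail_rail (hy : IsCut G d C a b y) (hy' : IsCut G d C a b y') (hxy : x < y)
    (hyx : y ≤ x') (hxy' : x' < y') (hyq : y' ≤ q) :
    ¬ SetDistLE G (rail G p d C a b x y) (rail G p d C a b x' y') d := by
  have hpos := h.pos
  refine h.geodesic.not_setDistLE rail_subset_pathNbhd rail_subset_pathNbhd
    (sup_le (h.start_le (by omega)) (h.end_le hy' (by omega) hyq)) ?_
  have := h.intervals.le_right (by omega : x ≤ q)
  have := h.intervals.le_left (y + 1) (by omega) (by omega)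
  have := h.intervals.right_add_lt (by omega) (by omega) (by omega : x < x') (by omega)
  have := h.intervals.right_add_lt_left_add (by omega) (by omega) (by omega : x + 3 ≤ y' + 1)
    (by omega)
  have := h.left_add_le_of_isCut hy (by omega) (by omega)
  have := h.right_mono hyx (by omega)
  have := h.left_succ_add_lt hy (by omega) (by omega : y < y') hyq
  omega

theorem not_setDistLE_piece_rail (hx : IsCut G d C a b x) (hy : IsCut G d C a b y) (hxy : x < y)
    (hyq : y ≤ q) (hstart : x < i ∨ ∃ z, IsCut G d C a b z ∧ i ≤ z ∧ z < x)
    (hend : i ≤ y ∨ ∃ z, IsCut G d C a b z ∧ y < z ∧ z < i) :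
    ¬ SetDistLE G (piece G d C a b i) (rail G p d C a b x y) d := by
  rintro ⟨u, hu, v, (hv | hv) | hv, huv⟩
  · exact h.not_setDistLE_piece_segment (h.segment_subset (by omega) hy (by omega) hyq)
      ⟨u, hu, v, hv, huv⟩
  · obtain ⟨z, hz, hzi⟩ : ∃ z, IsCut G d C a b z ∧ (i ≤ z ∧ z < x ∨ x ≤ z ∧ z < i) :=
      hstart.elim (fun hlt => ⟨x, hx, .inr ⟨le_rfl, hlt⟩⟩) fun ⟨z, hz, hzi⟩ => ⟨z, hz, .inl hzi⟩
    rcases hu with hu | hu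
    · exact h.not_setDistLE_component_spike (h.start_le (by omega)) hz hzi ⟨u, hu, v, hv, huv⟩
    · exact h.not_setDistLE_link_start_spike (by omega) (by omega) ⟨u, hu, v, hv, huv⟩
  · obtain ⟨z, hz, hzi⟩ : ∃ z, IsCut G d C a b z ∧ (i ≤ z ∧ z < y + 1 ∨ y + 1 ≤ z ∧ z < i) :=
      hend.elim (fun hle => ⟨y, hy, .inl ⟨hle, y.lt_add_one⟩⟩) fun ⟨z, hz, hzi⟩ => ⟨z, hz, .inr hzi⟩
    rcases hu with hu | hu
    · exact h.not_setDistLE_component_spike (h.end_le hy (by omega) hyq) hz hzi ⟨u, hu, v, hv, huv⟩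
    rcases hyq.lt_or_eq with hlt | rfl
    · exact h.not_setDistLE_link_end_spike hy (by omega) hlt (by omega) ⟨u, hu, v, hv, huv⟩
    · rw [spike, h.eq_empty (y + 1) (.inr y.lt_add_one), between_empty_right] at hv
      exact hv

theorem not_setDistLE_block_block (hz : IsCut G d C a b z) (hy : y ≤ z) (hx : z ≤ x') :
    ¬ SetDistLE G (block G d C a b x y) (block G d C a b x' y') d := by
  intro hle
  obtain ⟨i, -, hiy, hi⟩ := setDistLE_block_left hle
  obtain ⟨j, hxj, -, hj⟩ := setDistLE_block_left hi.symm
  exact h.not_setDistLE_piece_piece hz (hiy.trans hy) (hx.trans_lt hxj) hj.symm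

theorem not_setDistLE_block_rail (hx : IsCut G d C a b x) (hy : IsCut G d C a b y) (hxy : x < y)
    (hyq : y ≤ q) (hstart : x ≤ x' ∨ ∃ z, IsCut G d C a b z ∧ y' ≤ z ∧ z < x)
    (hend : y' ≤ y ∨ ∃ z, IsCut G d C a b z ∧ y < z ∧ z ≤ x') :
    ¬ SetDistLE G (block G d C a b x' y') (rail G p d C a b x y) d := by
  intro hle
  obtain ⟨i, hxi, hiy, hi⟩ := setDistLE_block_left hle
  exact h.not_setDistLE_piece_rail hx hy hxy hyq
    (hstart.imp (fun hle => hle.trans_lt hxi) fun ⟨z, hz, hyz, hzx⟩ => ⟨z, hz, hiy.trans hyz, hzx⟩)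
    (hend.imp (fun hle => hiy.trans hle) fun ⟨z, hz, hyz, hzx⟩ => ⟨z, hz, hyz, hzx.trans_lt hxi⟩) hi

theorem inter_rail_start_nonempty (hx : 0 < x) (hxq : x < q) :
    (C x ∩ rail G p d C a b x y).Nonempty := by
  have hpos := h.pos
  have hle := setDistLE_of_mem_attachments (by omega) (h.right_mem x hx hxq.le)
    (h.intervals.le_right hxq.le) (h.intervals.right_le x hxq)
  have hmeet := inter_between_nonempty hle
  rw [between_comm] at hmeet
  exact hmeet.mono (Set.inter_subset_inter_right _
    (Set.subset_union_right.trans Set.subset_union_left))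

theorem inter_rail_end_nonempty (hy : IsCut G d C a b y) (hpos : 0 < y) (hyq : y < q) :
    (C (y + 1) ∩ rail G p d C a b x y).Nonempty := by
  have hd := h.pos
  have hn := (h.left_add_le_of_isCut hy hpos hyq).trans (h.intervals.right_le y hyq)
  have hle := setDistLE_of_mem_attachments (by omega) (h.left_mem (y + 1) y.succ_pos hyq)
    (h.intervals.le_left _ (by omega) hyq) (by omega)
  have hmeet := inter_between_nonempty hle
  rw [between_comm] at hmeet
  exact hmeet.mono (Set.inter_subset_inter_right _ Set.subset_union_right)

theorem rail_inter_left_nonempty : (rail G p d C a b 0 y ∩ S).Nonempty := by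
  refine ⟨p 0, .inl (.inl ⟨b 0 - 400 * d, Set.left_mem_uIcc, ?_⟩), h.geodesic.zero_mem⟩
  rw [h.intervals.right_zero, Nat.sub_self]

theorem rail_inter_right_nonempty : (rail G p d C a b x q ∩ T).Nonempty := by
  refine ⟨p n, .inl (.inl ⟨a (q + 1) - 400 * d, Set.right_mem_uIcc, ?_⟩), h.geodesic.last_mem⟩
  rw [h.intervals.left_last, Nat.add_sub_cancel]

theorem block_inter_left_nonempty (hy : 0 < y) : (block G d C a b 0 y ∩ S).Nonempty := by
  have hmem := h.left_mem 1 one_pos h.intervals.pos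
  rw [h.intervals.left_one] at hmem
  exact (inter_nonempty_of_zero_mem_attachments (by have := h.pos; omega) hmem).mono
    (Set.inter_subset_inter_left _ (subset_block one_pos hy))

theorem block_inter_right_nonempty (hx : x < q) : (block G d C a b x q ∩ T).Nonempty := by
  have hmem := h.right_mem q h.intervals.pos le_rfl
  rw [h.intervals.right_last] at hmem
  exact (inter_nonempty_of_last_mem_attachments (by have := h.pos; omega) hmem).mono
    (Set.inter_subset_inter_left _ (subset_block hx le_rfl))

theorem hasKPaths_two : HasKPaths G S T 2 d := by
  obtain ⟨s, m, hs, hs0, hsm, hcut, hnot_cut⟩ :=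
    exists_strictMono_enumeration h.isCut_zero h.intervals.pos fun z => h.isCut_of_le
  have hlt : ∀ k, s k < s (k + 1) := fun k => hs k.lt_add_one
  have hle : ∀ k ≤ m, s (k + 1) ≤ q := fun k hk => hsm ▸ hs.monotone (by omega)
  refine hasKPaths_two_of_ladder (U := fun k => block G d C a b (s k) (s (k + 1)))
    (R := fun k => rail G p d C a b (s k) (s (k + 1))) (m := m) ?_ ?_ ?_ ?_ ?_ ?_ ?_ ?_ ?_ ?_ ?_
  · exact fun k hk => h.connected_block (hlt k) (hle k hk) (hnot_cut k)
  · exact fun k hk => h.connected_rail ((hlt k).trans_le (hle k hk)) (hcut _)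
      (Nat.zero_lt_of_lt (hlt k)) (hle k hk)
  · exact fun k hk => (h.inter_rail_start_nonempty (Nat.zero_lt_of_lt (hlt k))
      ((hlt _).trans_le (hle (k + 1) hk))).mono
      (Set.inter_subset_inter_left _ (subset_block (hlt k) le_rfl))
  · exact fun k hk => (Set.inter_comm _ _ ▸ h.inter_rail_end_nonempty (hcut (k + 1))
      (Nat.zero_lt_of_lt (hlt k)) ((hlt _).trans_le (hle (k + 1) hk))).mono
      (Set.inter_subset_inter_right _ (subset_block (Nat.lt_succ_self _) (hlt _)))
  · simpa only [hs0] using h.block_inter_left_nonempty (Nat.zero_lt_of_lt (hlt 0))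
  · simpa only [hs0] using h.rail_inter_left_nonempty
  · simpa only [hsm] using h.block_inter_right_nonempty ((hlt m).trans_le (hle m le_rfl))
  · simpa only [hsm] using h.rail_inter_right_nonempty
  · exact fun k l hkl _ => h.not_setDistLE_block_block (hcut (k + 1)) le_rfl (hs.monotone hkl)
  · exact fun k l hkl hl => h.not_setDistLE_rail_rail (hcut _) (hcut _) (hlt k) (hs.monotone hkl)
      (hlt l) (hle l hl)
  · refine fun k l _ hl hlk hkl => h.not_setDistLE_block_rail (hcut _) (hcut _) (hlt l) (hle l hl)
      ?_ ?_
    · rcases (by omega : l ≤ k ∨ k + 1 < l) with hlk | hkl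
      exacts [.inl (hs.monotone hlk), .inr ⟨_, hcut (k + 1), le_rfl, hs hkl⟩]
    · rcases (by omega : k ≤ l ∨ l + 1 < k) with hkl | hlk
      exacts [.inl (hs.monotone (Nat.succ_le_succ hkl)), .inr ⟨_, hcut k, hs hlk, le_rfl⟩]

end IsComponentChain

end Ladder

section ExistsComponentChain

variable {V : Type} {G : SimpleGraph V} {S T A : Set V} {p : ℕ → V} {n r M F d : ℕ}

theorem sInf_attachments_eq_zero_or_le :
    sInf (attachments G S T p n r M A) = 0 ∨ M ≤ sInf (attachments G S T p n r M A) := by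
  rcases (attachments G S T p n r M A).eq_empty_or_nonempty with hempty | hnonempty
  · exact .inl (by rw [hempty, Nat.sInf_empty])
  · rcases Nat.sInf_mem hnonempty with ⟨h, -⟩ | ⟨h, -⟩ | ⟨t, -, h, -⟩ <;> omega

theorem sSup_attachments_le_or_eq : sSup (attachments G S T p n r M A) ≤ n + M ∨
    sSup (attachments G S T p n r M A) = n + 2 * M := by
  rcases (attachments G S T p n r M A).eq_empty_or_nonempty with hempty | hnonempty
  · exact .inl (by rw [hempty, csSup_empty]; exact Nat.zero_le _)
  · rcases Nat.sSup_mem hnonempty bddAbove_attachments with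
      ⟨h, -⟩ | ⟨h, -⟩ | ⟨t, ht, h, -⟩ <;> omega

theorem IsSTGeodesic.isMarginCover (hp : IsSTGeodesic G S T p n) (hrM : r < M)
    (hwalk : ∀ i ≤ n, ∃ u ∈ S, ∃ v ∈ T, ∃ w : G.Walk u v,
      ∀ y ∈ w.support, ¬ DistLE G (p i) y (r + M)) :
    IsMarginCover (fun C : G.ComponentCompl (pathNbhd G p 0 n r) =>
      sInf (attachments G S T p n r M C)) (fun C => sSup (attachments G S T p n r M C)) n M where
  left_eq_or_le _ := sInf_attachments_eq_zero_or_le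
  right_le_or_eq _ := sSup_attachments_le_or_eq
  cover x hMx hxn := by
    obtain ⟨i, rfl⟩ := Nat.exists_eq_add_of_le' hMx
    obtain ⟨u, hu, v, hv, w, hfar⟩ := hwalk i (by omega)
    obtain ⟨C, α, hα, β, hβ, hαi, hiβ⟩ :=
      hp.exists_attachment_of_walk hrM (by omega) hu hv w hfar
    have := Nat.sInf_le hα
    have := le_csSup bddAbove_attachments hβ
    exact ⟨C, by omega, by omega⟩

theorem IsSTGeodesic.between_subset (hp : IsSTGeodesic G S T p n)
    {C C' : G.ComponentCompl (pathNbhd G p 0 n r)} (hne : C ≠ C') :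
    Between G C C' F ⊆ pathNbhd G p (sInf (attachments G S T p n r M C') - (M + 2 * (r + F)))
      (sSup (attachments G S T p n r M C) - M) (r + F) := by
  intro z hz
  obtain ⟨s, t, -, hs, ht, hts, hzs⟩ := hp.exists_attachment_of_mem_between (M := M) hne hz
  have := Nat.sInf_le ht
  have := le_csSup bddAbove_attachments hs
  exact ⟨s, by omega, by omega, hzs⟩

theorem IsIntervalChain.congr_near {a b : ℕ → ℕ} {near near' : ℕ → ℕ → Prop} {K Q q : ℕ}
    (h : IsIntervalChain a b near n M K Q q)
    (hnear : ∀ i j, 0 < i → i < j → j ≤ q → (near i j ↔ near' i j)) :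
    IsIntervalChain a b near' n M K Q q :=
  { h with
    overlap_or_near := fun i hi hiq =>
      (h.overlap_or_near i hi hiq).imp_right (hnear i (i + 1) hi (by omega) hiq).1
    not_near := fun i j hi hij hj =>
      (hnear i j hi (by omega) hj).not.1 (h.not_near i j hi hij hj) }

theorem IsSTGeodesic.isComponentChain (hp : IsSTGeodesic G S T p n) (hd : 0 < d)
    {c : ℕ → G.ComponentCompl (pathNbhd G p 0 n (10 * d))} {C : ℕ → Set V} {a b : ℕ → ℕ} {q : ℕ}
    (hc : IsIntervalChain a b (fun i j => SetDistLE G (c i) (c j) (8 * d)) n (400 * d) (40 * d)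
      (200 * d) q)
    (hleft : ∀ i, 0 < i → i ≤ q →
      sInf (attachments G S T p n (10 * d) (400 * d) (c i)) = a i)
    (hright : ∀ i, 0 < i → i ≤ q →
      sSup (attachments G S T p n (10 * d) (400 * d) (c i)) = b i)
    (hC : ∀ i, 0 < i → i ≤ q → C i = c i) (hempty : ∀ i, i = 0 ∨ q < i → C i = ∅) :
    IsComponentChain G S T p n d C a b q := by
  have hnonempty : ∀ i, 0 < i → i ≤ q →
      (attachments G S T p n (10 * d) (400 * d) (c i)).Nonempty := by
    intro i hi hiq
    by_contra hne
    have hbi := hc.two_mul_le_right i hi hiq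
    rw [← hright i hi hiq, Set.not_nonempty_iff_eq_empty.1 hne, csSup_empty, Nat.bot_eq_zero] at hbi
    omega
  refine ⟨hp, hd, hc.congr_near fun i j hi hij hj => ?_, fun i hi hiq => ?_, hempty,
    fun i => ?_, fun i hi hiq => ?_, fun i hi hiq => ?_, fun i hi hiq => ?_⟩
  · rw [hC i hi (by omega), hC j (by omega) hj]
  · rw [hC i hi hiq]
    exact connected_induce_componentCompl _
  · by_cases hi : i = 0 ∨ q < i
    · rw [hempty i hi]
      exact Set.disjoint_empty _
    · rw [hC i (by omega) (by omega)]
      exact (c i).disjoint_right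
  · rw [hC i hi hiq, ← hleft i hi hiq]
    exact Nat.sInf_mem (hnonempty i hi hiq)
  · rw [hC i hi hiq, ← hright i hi hiq]
    exact Nat.sSup_mem (hnonempty i hi hiq) bddAbove_attachments
  · have hlt := hc.right_add_lt (by omega) (by omega) (Nat.lt_add_one i) hiq
    have hne : c i ≠ c (i + 1) := fun heq => by
      rw [← hright i hi hiq.le, heq, hright (i + 1) i.succ_pos hiq] at hlt
      omega
    rw [hC i hi hiq.le, hC (i + 1) i.succ_pos hiq, ← hleft (i + 1) i.succ_pos hiq,
      ← hright i hi hiq.le]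
    refine (hp.between_subset hne).trans (pathNbhd_mono ?_ le_rfl ?_) <;> omega

theorem IsSTGeodesic.exists_isComponentChain (hp : IsSTGeodesic G S T p n) (hd : 0 < d)
    (hwalk : ∀ i ≤ n, ∃ u ∈ S, ∃ v ∈ T, ∃ w : G.Walk u v,
      ∀ y ∈ w.support, ¬ DistLE G (p i) y (410 * d)) :
    ∃ C a b q, IsComponentChain G S T p n d C a b q := by
  classical
  rw [show 410 * d = 10 * d + 400 * d by omega] at hwalk
  have hcover := hp.isMarginCover (by omega) hwalk
  have hclose : ∀ D D' : G.ComponentCompl (pathNbhd G p 0 n (10 * d)),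
      SetDistLE G (D : Set V) D' (8 * d) →
      sInf (attachments G S T p n (10 * d) (400 * d) D') ≤
        sSup (attachments G S T p n (10 * d) (400 * d) D) + 40 * d := fun D D' h =>
    (hp.sInf_attachments_le h.symm).trans (by omega)
  obtain ⟨c, a, b, q, hends, hc⟩ :=
    hcover.exists_isIntervalChain hclose (Q := 200 * d) (by omega) (by omega) (by omega)
  exact ⟨fun i => if 0 < i ∧ i ≤ q then c i else ∅, a, b, q, hp.isComponentChain hd hc
    (fun i hi hiq => (hends i hi hiq).1) (fun i hi hiq => (hends i hi hiq).2)
    (fun i hi hiq => if_pos ⟨hi, hiq⟩) fun i hi => if_neg (by omega)⟩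

end ExistsComponentChain

theorem IsSTGeodesic.hasKPaths_two {V : Type} {G : SimpleGraph V} {S T : Set V} {p : ℕ → V}
    {n d : ℕ} (hp : IsSTGeodesic G S T p n) (hd : 0 < d)
    (hwalk : ∀ i ≤ n, ∃ u ∈ S, ∃ v ∈ T, ∃ w : G.Walk u v,
      ∀ y ∈ w.support, ¬ DistLE G (p i) y (410 * d)) : HasKPaths G S T 2 d := by
  obtain ⟨C, a, b, q, h⟩ := hp.exists_isComponentChain hd hwalk
  exact h.hasKPaths_two

/-- The coarse Menger conjecture holds for `k = 2`. -/
theorem stmt_12 (k d : ℕ) (hk : 1 ≤ k) (hd : 1 ≤ d) :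
    ∃ ℓ : ℕ, 0 < ℓ ∧ ∀ (V : Type) (G : SimpleGraph V) (S T : Set V),
      HasKPaths G S T 2 d ∨ CoarseSeparator G S T 1 ℓ := by
  refine ⟨410 * d, by omega, fun V G S T => ?_⟩
  by_cases hdist : ∃ m, SetDistLE G S T m
  · obtain ⟨m, hm⟩ := hdist
    obtain ⟨p, n, hp⟩ := exists_isSTGeodesic hm
    by_cases hwalk : ∀ i ≤ n, ∃ u ∈ S, ∃ v ∈ T, ∃ w : G.Walk u v,
        ∀ y ∈ w.support, ¬ DistLE G (p i) y (410 * d)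
    · exact .inl (hp.hasKPaths_two hd hwalk)
    · push Not at hwalk
      obtain ⟨i, -, hball⟩ := hwalk
      refine .inr ⟨{p i}, (Finset.card_singleton _).le, fun u v w _ hu hv => ?_⟩
      obtain ⟨y, hy, hiy⟩ := hball u hu v hv w
      exact ⟨y, hy, p i, Finset.mem_singleton_self _, hiy⟩
  · exact .inr ⟨∅, Nat.zero_le _, fun u v w _ hu hv =>
      absurd ⟨w.length, u, hu, v, hv, w, le_rfl⟩ hdist⟩
end

section
/- For every integer Δ ≥ 1 there exists C = C(Δ) > 0 with the following property: for every graph G of maximum degree at most Δ, every integer k ≥ 1, and all S,T ⊆ V(G), either there are k paths between S and T pairwise at distance at least two (i.e., pairwise anticomplete: vertex-disjoint with no edges between them), or there is a set X ⊆ V(G) with |X| ≤ kC such that every path between S and T contains a vertex of X. -/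
/-!
Give each vertex of a set `W` as weight its degree in `G[W]`, plus one for each of `S` and `T` that
contains it. In the vertex set of an induced path that meets each of `S` and `T` in one end only,
all weights are two. Hence, if all weights in `W` are at most two, no edge of `G` joins two disjoint
paths of this kind inside `W`, and Menger's theorem gives the paths we want.

The weights are reduced at the cost of connectivity. Let `K` be a set of vertices with pairwise
disjoint closed neighbourhoods. Contracting these neighbourhoods divides the connectivity between
`S` and `T` by at most `Δ + 1`, and `k` disjoint paths of the contraction lift to `k` disjoint paths
of `G` in which no vertex of `K` has a neighbour on a path other than its own. Restricting `W` to
the union of these paths brings the weights on `K` down to two. The vertices of a finite `W` are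
covered by `(Δ + 1) ^ 2 + 1` such sets `K`, as one sees by greedy colouring; so a connectivity of
`(Δ + 1) ^ ((Δ + 1) ^ 2 + 1) * k` suffices. For infinite `G`, the separators of finite families of
paths yield one for all paths by compactness.
-/

section Linked

variable {V : Type*} {G G' : SimpleGraph V} {A B S T X : Set V} {x y z : V} {e : Sym2 V}

/-- Some walk of `G` from `S` to `T` has all its vertices in `A`. Reachability within `A` is the
case where `S` and `T` are singletons. -/
def Linked (G : SimpleGraph V) (A S T : Set V) : Prop :=
  ∃ u ∈ S, ∃ v ∈ T, ∃ w : G.Walk u v, ∀ z ∈ w.support, z ∈ A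

namespace Linked

theorem symm (h : Linked G A S T) : Linked G A T S := by
  obtain ⟨u, hu, v, hv, w, hw⟩ := h
  exact ⟨v, hv, u, hu, w.reverse, by simpa using hw⟩

theorem mono {S' T' : Set V} (h : Linked G A S T) (hA : A ⊆ B) (hS : S ⊆ S') (hT : T ⊆ T') :
    Linked G B S' T' := by
  obtain ⟨u, hu, v, hv, w, hw⟩ := h
  exact ⟨u, hS hu, v, hT hv, w, fun z hz => hA (hw z hz)⟩

theorem mono_set (h : Linked G A S T) (hA : A ⊆ B) : Linked G B S T :=
  h.mono hA subset_rfl subset_rfl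

theorem mono_graph (h : Linked G A S T) (hG : G ≤ G') : Linked G' A S T := by
  obtain ⟨u, hu, v, hv, w, hw⟩ := h
  exact ⟨u, hu, v, hv, w.mapLe hG, by simpa using hw⟩

theorem of_mem (hA : z ∈ A) (hS : z ∈ S) (hT : z ∈ T) : Linked G A S T :=
  ⟨z, hS, z, hT, .nil, by simpa using hA⟩

theorem refl (hz : z ∈ A) : Linked G A {z} {z} :=
  of_mem hz rfl rfl

theorem of_adj (hx : x ∈ A) (hy : y ∈ A) (h : G.Adj x y) : Linked G A {x} {y} :=
  ⟨x, rfl, y, rfl, h.toWalk, by simp [hx, hy]⟩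

theorem trans (h : Linked G A S {z}) (h' : Linked G A {z} T) : Linked G A S T := by
  obtain ⟨u, hu, _, rfl, w, hw⟩ := h
  obtain ⟨_, rfl, v, hv, w', hw'⟩ := h'
  refine ⟨u, hu, v, hv, w.append w', fun a ha => ?_⟩
  exact ((w.mem_support_append_iff w').1 ha).elim (hw a) (hw' a)

theorem right_mem (h : Linked G A S {z}) : z ∈ A := by
  obtain ⟨u, -, _, rfl, w, hw⟩ := h
  exact hw _ w.end_mem_support

theorem exists_mem_right (h : Linked G A S T) : ∃ v ∈ T, Linked G A S {v} := by
  obtain ⟨u, hu, v, hv, w, hw⟩ := h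
  exact ⟨v, hv, u, hu, v, rfl, w, hw⟩

theorem inter_ends (h : Linked G A S T) : Linked G A (S ∩ A) (T ∩ A) := by
  obtain ⟨u, hu, v, hv, w, hw⟩ := h
  exact ⟨u, ⟨hu, hw u w.start_mem_support⟩, v, ⟨hv, hw v w.end_mem_support⟩, w, hw⟩

theorem sdiff_of_not_linked (h : Linked G A S T) (hX : ¬ Linked G A S X) :
    Linked G (A \ X) S T := by
  classical
  obtain ⟨u, hu, v, hv, w, hw⟩ := h
  refine ⟨u, hu, v, hv, w, fun a ha => ⟨hw a ha, fun haX => hX ?_⟩⟩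
  exact ⟨u, hu, a, haX, w.takeUntil a ha,
    fun b hb => hw b (w.support_takeUntil_subset_support ha hb)⟩

theorem exists_adj_of_not_linked (h : Linked G A S T) (h' : ¬ Linked G' A S T) :
    ∃ x ∈ A, ∃ y ∈ A, G.Adj x y ∧ ¬ G'.Adj x y ∧ Linked G' A S {x} ∧ ¬ Linked G' A S {y} := by
  obtain ⟨u, hu, v, hv, w, hw⟩ := h
  have huR : Linked G' A S {u} := of_mem (hw u w.start_mem_support) hu rfl
  have hvR : ¬ Linked G' A S {v} := fun hv' =>
    h' (hv'.mono subset_rfl subset_rfl (Set.singleton_subset_iff.2 hv))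
  obtain ⟨d, hd, hfst, hsnd⟩ := w.exists_boundary_dart {z | Linked G' A S {z}} huR hvR
  have hsndA : d.snd ∈ A := hw _ (w.dart_snd_mem_support_of_mem_darts hd)
  exact ⟨d.fst, hfst.right_mem, d.snd, hsndA, d.adj,
    fun hadj => hsnd (hfst.trans (of_adj hfst.right_mem hsndA hadj)), hfst, hsnd⟩

theorem exists_eq_of_not_linked_deleteEdges (h : Linked G A S T)
    (h' : ¬ Linked (G.deleteEdges {e}) A S T) :
    ∃ x y, e = s(x, y) ∧ G.Adj x y ∧ Linked (G.deleteEdges {e}) A S {x} ∧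
      Linked (G.deleteEdges {e}) A {y} T := by
  have eq_of_not_adj : ∀ {x y}, G.Adj x y → ¬ (G.deleteEdges {e}).Adj x y → e = s(x, y) := by
    intro x y hadj hdel
    by_contra hne
    exact hdel (by simpa [hadj] using Ne.symm hne)
  obtain ⟨x, -, y, -, hxy, hxy', hx, -⟩ := h.exists_adj_of_not_linked h'
  obtain ⟨p, -, q, -, hpq, hpq', hp, -⟩ :=
    h.symm.exists_adj_of_not_linked fun h'' => h' h''.symm
  have he : s(x, y) = s(p, q) := (eq_of_not_adj hxy hxy').symm.trans (eq_of_not_adj hpq hpq')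
  refine ⟨x, y, eq_of_not_adj hxy hxy', hxy, hx, ?_⟩
  rcases Sym2.eq_iff.1 he with ⟨rfl, rfl⟩ | ⟨rfl, rfl⟩
  · exact absurd (hx.trans hp.symm) h'
  · exact hp.symm

end Linked

end Linked

section ShortestLink

variable {V : Type*} {G : SimpleGraph V} {A S T : Set V} {u v : V} {w : G.Walk u v}

/-- `w` is a shortest walk from `S` to `T` among those with all their vertices in `A`. -/
structure IsShortestLink (A S T : Set V) (w : G.Walk u v) : Prop where
  left_mem : u ∈ S
  right_mem : v ∈ T
  support_subset : ∀ z ∈ w.support, z ∈ A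
  length_le : ∀ {u' v' : V} (w' : G.Walk u' v'), u' ∈ S → v' ∈ T → (∀ z ∈ w'.support, z ∈ A) →
    w.length ≤ w'.length

theorem Linked.exists_isShortestLink (h : Linked G A S T) :
    ∃ (u v : V) (w : G.Walk u v), IsShortestLink A S T w := by
  classical
  have hlen : ∃ n, ∃ u ∈ S, ∃ v ∈ T, ∃ w : G.Walk u v, (∀ z ∈ w.support, z ∈ A) ∧ w.length = n := by
    obtain ⟨u, hu, v, hv, w, hw⟩ := h
    exact ⟨_, u, hu, v, hv, w, hw, rfl⟩
  obtain ⟨u, hu, v, hv, w, hw, hwlen⟩ := Nat.find_spec hlen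
  refine ⟨u, v, w, hu, hv, hw, fun {u' v'} w' hu' hv' hw' => ?_⟩
  exact hwlen ▸ Nat.find_min' hlen ⟨u', hu', v', hv', w', hw', rfl⟩

namespace IsShortestLink

theorem isPath (h : IsShortestLink A S T w) : w.IsPath := by
  classical
  have hle : w.length ≤ w.bypass.length := h.length_le _ h.left_mem h.right_mem
    fun z hz => h.support_subset z (w.support_bypass_subset_support hz)
  exact w.bypass_eq_self_of_length_le_length_bypass hle ▸ w.bypass_isPath

theorem reverse (h : IsShortestLink A S T w) : IsShortestLink A T S w.reverse where
  left_mem := h.right_mem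
  right_mem := h.left_mem
  support_subset := by simpa using h.support_subset
  length_le w' hu' hv' hw' := by
    simpa using h.length_le w'.reverse hv' hu' (by simpa using hw')

theorem mem_of_mem_support_take (h : IsShortestLink A S T w) (i : ℕ) :
    ∀ z ∈ (w.take i).support, z ∈ A :=
  fun z hz => h.support_subset z ((w.isSubwalk_take i).support_subset hz)

theorem mem_of_mem_support_drop (h : IsShortestLink A S T w) (i : ℕ) :
    ∀ z ∈ (w.drop i).support, z ∈ A :=
  fun z hz => h.support_subset z ((w.isSubwalk_drop i).support_subset hz)

theorem getVert_mem_right_iff (h : IsShortestLink A S T w) {i : ℕ} (hi : i ≤ w.length) :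
    w.getVert i ∈ T ↔ i = w.length := by
  refine ⟨fun hiT => ?_, fun hi => by simpa [hi] using h.right_mem⟩
  have := h.length_le (w.take i) h.left_mem hiT (h.mem_of_mem_support_take i)
  rw [w.take_length] at this
  omega

theorem getVert_mem_left_iff (h : IsShortestLink A S T w) {i : ℕ} (hi : i ≤ w.length) :
    w.getVert i ∈ S ↔ i = 0 := by
  have := h.reverse.getVert_mem_right_iff (i := w.length - i) (by simp)
  rw [w.getVert_reverse, w.length_reverse, Nat.sub_sub_self hi] at this
  rw [this]
  omega

theorem eq_succ_of_adj_getVert (h : IsShortestLink A S T w) {i j : ℕ} (hij : i < j)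
    (hj : j ≤ w.length) (hadj : G.Adj (w.getVert i) (w.getVert j)) : j = i + 1 := by
  let shortcut := (w.take i).append (.cons hadj (w.drop j))
  have hshort : ∀ z ∈ shortcut.support, z ∈ A := by
    intro z hz
    rw [SimpleGraph.Walk.mem_support_append_iff, SimpleGraph.Walk.support_cons,
      List.mem_cons] at hz
    rcases hz with hz | rfl | hz
    · exact h.mem_of_mem_support_take i z hz
    · exact h.support_subset _ (w.getVert_mem_support i)
    · exact h.mem_of_mem_support_drop j z hz
  have := h.length_le shortcut h.left_mem h.right_mem hshort
  rw [SimpleGraph.Walk.length_append, SimpleGraph.Walk.length_cons, w.take_length,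
    w.drop_length] at this
  omega

theorem adj_getVert_iff (h : IsShortestLink A S T w) {i j : ℕ} (hi : i ≤ w.length)
    (hj : j ≤ w.length) : G.Adj (w.getVert i) (w.getVert j) ↔ j = i + 1 ∨ j + 1 = i := by
  constructor
  · intro hadj
    rcases lt_trichotomy i j with hij | rfl | hji
    · exact .inl (h.eq_succ_of_adj_getVert hij hj hadj)
    · exact absurd hadj G.irrefl
    · exact .inr (h.eq_succ_of_adj_getVert hji hi hadj.symm).symm
  · rintro (rfl | rfl)
    · exact w.adj_getVert_succ hj
    · exact (w.adj_getVert_succ hi).symm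

end IsShortestLink

theorem Linked.exists_first_hit (h : Linked G A S T) :
    ∃ z ∈ T, ∃ P ⊆ A, Linked G P S {z} ∧ ∀ a ∈ P, a ≠ z → Linked G (A \ T) S {a} := by
  obtain ⟨u, v, w, hw⟩ := h.exists_isShortestLink
  refine ⟨v, hw.right_mem, {z | z ∈ w.support}, hw.support_subset,
    ⟨u, hw.left_mem, v, rfl, w, fun _ hz => hz⟩, fun a ha hav => ?_⟩
  obtain ⟨i, rfl, hi⟩ := SimpleGraph.Walk.mem_support_iff_exists_getVert.1 ha
  have hlt : i < w.length := hi.lt_of_ne (by rintro rfl; exact hav w.getVert_length)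
  refine ⟨u, hw.left_mem, _, rfl, w.take i,
    fun b hb => ⟨hw.mem_of_mem_support_take i b hb, fun hbT => ?_⟩⟩
  obtain ⟨j, rfl, -⟩ := SimpleGraph.Walk.mem_support_iff_exists_getVert.1 hb
  rw [w.take_getVert, hw.getVert_mem_right_iff (by omega)] at hbT
  omega

end ShortestLink

section Menger

variable {V : Type*} {G G' : SimpleGraph V} {W S T : Set V} {k : ℕ}

/-- The vertex connectivity between `S` and `T` inside `W` is at least `n`: removing fewer than `n`
vertices from `W` leaves a walk from `S` to `T`. -/
def ConnectivityGE (G : SimpleGraph V) (W S T : Set V) (n : ℕ) : Prop :=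
  ∀ X : Finset V, X.card < n → Linked G (W \ X) S T

/-- There are `k` pairwise disjoint subsets of `W`, each containing a walk from `S` to `T`; this
says that `W` contains `k` disjoint paths between `S` and `T`, without choosing them. -/
def HasLinkage (G : SimpleGraph V) (W S T : Set V) (k : ℕ) : Prop :=
  ∃ A : Fin k → Set V, Pairwise (Function.onFun Disjoint A) ∧ ∀ i, A i ⊆ W ∧ Linked G (A i) S T

theorem ConnectivityGE.symm (h : ConnectivityGE G W S T k) : ConnectivityGE G W T S k :=
  fun X hX => (h X hX).symm

namespace HasLinkage

theorem mono_graph (h : HasLinkage G W S T k) (hG : G ≤ G') : HasLinkage G' W S T k := by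
  obtain ⟨A, hdisj, hA⟩ := h
  exact ⟨A, hdisj, fun i => ⟨(hA i).1, (hA i).2.mono_graph hG⟩⟩

theorem of_finset {Z : Finset V} {P : V → Set V} (hdisj : (Z : Set V).PairwiseDisjoint P)
    (hP : ∀ z ∈ Z, P z ⊆ W ∧ Linked G (P z) S T) : HasLinkage G W S T Z.card := by
  refine ⟨fun i => P (Z.equivFin.symm i), fun i j hij => ?_, fun i => hP _ (Z.equivFin.symm i).2⟩
  exact hdisj (Z.equivFin.symm i).2 (Z.equivFin.symm j).2
    fun h => hij (Z.equivFin.symm.injective (Subtype.ext h))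

theorem connectivityGE (h : HasLinkage G W S T k) : ConnectivityGE G W S T k := by
  obtain ⟨A, hdisj, hA⟩ := h
  intro X hX
  obtain ⟨i, hi⟩ : ∃ i, Disjoint (A i) X := by
    by_contra! hmeet
    choose z hzA hzX using fun i => Set.not_disjoint_iff.1 (hmeet i)
    have hinj : Function.Injective z := fun i j hij => by
      by_contra hne
      exact Set.disjoint_left.1 (hdisj hne) (hzA i) (hij ▸ hzA j)
    have := Finset.card_le_card_of_injOn (s := Finset.univ) z (fun i _ => hzX i) hinj.injOn
    rw [Finset.card_univ, Fintype.card_fin] at this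
    omega
  exact (hA i).2.mono_set (Set.subset_sdiff.2 ⟨(hA i).1, hi⟩)

theorem le_card {Z : Finset V} (h : HasLinkage G W S Z k) : k ≤ Z.card := by
  by_contra! hlt
  obtain ⟨z, hz, hlink⟩ := (h.connectivityGE Z hlt).exists_mem_right
  exact hlink.right_mem.2 hz

theorem exists_indexed_by_ends {Z : Finset V} (h : HasLinkage G W S Z Z.card) :
    ∃ P : V → Set V, (Z : Set V).PairwiseDisjoint P ∧ ∀ z ∈ Z, P z ⊆ W ∧ Linked G (P z) S {z} ∧
      ∀ a ∈ P z, a ≠ z → Linked G (W \ Z) S {a} := by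
  obtain ⟨A, hdisj, hA⟩ := h
  choose endpt hend Q hQA hlink hfirst using fun i => (hA i).2.exists_first_hit
  have hinj : Function.Injective endpt := fun i j hij => by
    by_contra hne
    exact Set.disjoint_left.1 (hdisj hne) (hQA i (hlink i).right_mem)
      (hij ▸ hQA j (hlink j).right_mem)
  have hsurj : Set.SurjOn endpt (Finset.univ : Finset (Fin Z.card)) Z :=
    Finset.surjOn_of_injOn_of_card_le endpt (fun i _ => hend i) hinj.injOn (by simp)
  refine ⟨Function.extend endpt Q fun _ => ∅, fun z hz z' hz' hne => ?_, fun z hz => ?_⟩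
  · obtain ⟨i, -, rfl⟩ := hsurj hz
    obtain ⟨j, -, rfl⟩ := hsurj hz'
    rw [Function.onFun, hinj.extend_apply, hinj.extend_apply]
    exact (hdisj (ne_of_apply_ne endpt hne)).mono (hQA i) (hQA j)
  · obtain ⟨i, -, rfl⟩ := hsurj hz
    rw [hinj.extend_apply]
    exact ⟨(hQA i).trans (hA i).1, hlink i, fun a ha hne =>
      (hfirst i a ha hne).mono_set (Set.sdiff_subset_sdiff_left (hA i).1)⟩

end HasLinkage

open Classical in
theorem ConnectivityGE.insert_of_deleteEdges {x y : V} {X : Finset V}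
    (h : ConnectivityGE G W S T k) (hX : ¬ Linked (G.deleteEdges {s(x, y)}) (W \ X) S T)
    (hy : Linked (G.deleteEdges {s(x, y)}) (W \ X) {y} T) :
    ConnectivityGE (G.deleteEdges {s(x, y)}) W S (insert x X : Finset V) k := by
  intro Y hY
  by_contra hxX
  have avoid_X : ∀ {R : Set V}, Linked (G.deleteEdges {s(x, y)}) (W \ Y) S R →
      Linked (G.deleteEdges {s(x, y)}) (W \ X) S R := fun hR =>
    (hR.sdiff_of_not_linked fun hX' => hxX (hX'.mono subset_rfl subset_rfl (by simp))).mono_set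
      (Set.sdiff_subset_sdiff_left Set.sdiff_subset)
  obtain ⟨p, q, hpq, -, hp, -⟩ :=
    (h Y hY).exists_eq_of_not_linked_deleteEdges fun hST => hX (avoid_X hST)
  rcases Sym2.eq_iff.1 hpq with ⟨rfl, rfl⟩ | ⟨rfl, rfl⟩
  · exact hxX (hp.mono subset_rfl subset_rfl (by simp))
  · exact hX ((avoid_X hp).trans hy)

open Classical in
theorem HasLinkage.exists_indexed_by_insert {x : V} {X : Finset V} (hXk : X.card < k)
    (hx : Linked G (W \ X) S {x}) (h : HasLinkage G W S (insert x X : Finset V) k) :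
    ∃ P : V → Set V, (↑(insert x X) : Set V).PairwiseDisjoint P ∧
      ∀ z ∈ insert x X, P z ⊆ W ∧ Linked G (P z) S {z} ∧
        ∀ a ∈ P z, Linked G (W \ X) S {a} ∨ a = z ∧ a ∈ X := by
  obtain rfl : k = (insert x X).card :=
    le_antisymm h.le_card ((Finset.card_insert_le x X).trans hXk)
  obtain ⟨P, hdisj, hP⟩ := h.exists_indexed_by_ends
  refine ⟨P, by simpa using hdisj, fun z hz => ⟨(hP z hz).1, (hP z hz).2.1, fun a ha => ?_⟩⟩
  by_cases haz : a = z
  · subst haz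
    rcases Finset.mem_insert.1 hz with rfl | haX
    · exact .inl hx
    · exact .inr ⟨rfl, haX⟩
  · refine .inl (((hP z hz).2.2 a ha haz).mono_set ?_)
    exact Set.sdiff_subset_sdiff_right (by simp)

theorem disjoint_of_not_linked {P Q X : Set V} {z z' : V} (hX : ¬ Linked G (W \ X) S T)
    (hP : ∀ a ∈ P, Linked G (W \ X) S {a} ∨ a = z ∧ a ∈ X)
    (hQ : ∀ a ∈ Q, Linked G (W \ X) T {a} ∨ a = z' ∧ a ∈ X) (hne : z ∈ X → z ≠ z') :
    Disjoint P Q := by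
  refine Set.disjoint_left.2 fun a haP haQ => ?_
  rcases hP a haP with haS | ⟨rfl, haX⟩ <;> rcases hQ a haQ with haT | ⟨haz', haX'⟩
  · exact hX (haS.trans haT.symm)
  · exact haS.right_mem.2 haX'
  · exact haT.right_mem.2 haX
  · exact hne haX haz'

open Classical in
theorem HasLinkage.glue {x y : V} {X : Finset V} (hG : G' ≤ G) (hxy : G.Adj x y)
    (hXk : X.card < k) (hX : ¬ Linked G' (W \ X) S T) (hx : Linked G' (W \ X) S {x})
    (hy : Linked G' (W \ X) {y} T) (hS : HasLinkage G' W S (insert x X : Finset V) k)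
    (hT : HasLinkage G' W T (insert y X : Finset V) k) : HasLinkage G W S T k := by
  have hxX : x ∉ X := hx.right_mem.2
  have hyX : y ∉ X := hy.symm.right_mem.2
  obtain rfl : k = (insert x X).card :=
    le_antisymm hS.le_card ((Finset.card_insert_le x X).trans hXk)
  obtain ⟨P, hPdisj, hP⟩ := hS.exists_indexed_by_insert hXk hx
  obtain ⟨Q, hQdisj, hQ⟩ := hT.exists_indexed_by_insert hXk hy.symm
  let σ := Equiv.swap x y
  have σ_of_mem : ∀ z ∈ X, σ z = z := fun z hz =>
    Equiv.swap_apply_of_ne_of_ne (ne_of_mem_of_not_mem hz hxX) (ne_of_mem_of_not_mem hz hyX)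
  have σ_mem : ∀ z ∈ insert x X, σ z ∈ insert y X := by
    intro z hz
    rcases Finset.mem_insert.1 hz with rfl | hz
    · simp [σ]
    · simp [σ_of_mem z hz, hz]
  have cross : ∀ z ∈ insert x X, ∀ z' ∈ insert x X, z ≠ z' → Disjoint (P z) (Q (σ z')) := by
    intro z hz z' hz' hne
    refine disjoint_of_not_linked hX (hP z hz).2.2 (hQ _ (σ_mem z' hz')).2.2 fun hzX heq => ?_
    exact hne (σ.injective ((σ_of_mem z hzX).trans heq))
  refine .of_finset (P := fun z => P z ∪ Q (σ z)) (fun z hz z' hz' hne => ?_) fun z hz => ⟨?_, ?_⟩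
  · simp only [Function.onFun, Set.disjoint_union_left, Set.disjoint_union_right]
    exact ⟨⟨hPdisj (by simpa using hz) (by simpa using hz') hne, (cross z' hz' z hz hne.symm).symm⟩,
      cross z hz z' hz' hne, hQdisj (by simpa using σ_mem z hz) (by simpa using σ_mem z' hz')
        (σ.injective.ne hne)⟩
  · exact Set.union_subset (hP z hz).1 (hQ _ (σ_mem z hz)).1
  · have hSz : Linked G (P z ∪ Q (σ z)) S {z} :=
      ((hP z hz).2.1.mono_graph hG).mono_set Set.subset_union_left
    have hTz : Linked G (P z ∪ Q (σ z)) {σ z} T :=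
      ((hQ _ (σ_mem z hz)).2.1.mono_graph hG).symm.mono_set Set.subset_union_right
    have hzσ : Linked G (P z ∪ Q (σ z)) {z} {σ z} := by
      rcases Finset.mem_insert.1 hz with rfl | hzX
      · exact .of_adj hSz.right_mem hTz.symm.right_mem (by simpa [σ] using hxy)
      · simpa only [σ_of_mem z hzX] using Linked.refl hSz.right_mem
    exact hSz.trans (hzσ.trans hTz)

theorem Linked.inter_nonempty_of_bot {A : Set V} (h : Linked (⊥ : SimpleGraph V) A S T) :
    (A ∩ (S ∩ T)).Nonempty := by
  obtain ⟨u, hu, v, hv, w, hw⟩ := h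
  cases w with
  | nil => exact ⟨u, hw u (by simp), hu, hv⟩
  | cons hadj _ => exact hadj.elim

theorem ConnectivityGE.hasLinkage_bot (h : ConnectivityGE (⊥ : SimpleGraph V) W S T k) :
    HasLinkage (⊥ : SimpleGraph V) W S T k := by
  obtain ⟨Z, hZ, rfl⟩ : ∃ Z : Finset V, ↑Z ⊆ W ∩ (S ∩ T) ∧ Z.card = k := by
    by_cases hfin : (W ∩ (S ∩ T)).Finite
    · suffices k ≤ hfin.toFinset.card by
        obtain ⟨Z, hZ, hZk⟩ := Finset.exists_subset_card_eq this
        exact ⟨Z, fun z hz => hfin.mem_toFinset.1 (hZ hz), hZk⟩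
      by_contra! hlt
      obtain ⟨z, hzW, hz⟩ := (h _ hlt).inter_nonempty_of_bot
      exact hzW.2 (hfin.mem_toFinset.2 ⟨hzW.1, hz⟩)
    · exact Set.Infinite.exists_subset_card_eq hfin k
  refine .of_finset (P := fun z => {z}) (fun z _ z' _ hne => Set.disjoint_singleton.2 hne)
    fun z hz => ⟨Set.singleton_subset_iff.2 (hZ hz).1, ?_⟩
  exact .of_mem rfl (hZ hz).2.1 (hZ hz).2.2

/-- Menger's theorem. Delete an edge `xy`. If a set `X` of fewer than `k` vertices now separates `S`
from `T`, then `k`-linkages from `S` to `X ∪ {x}` and from `X ∪ {y}` to `T` exist by induction and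
meet only in `X`. -/
theorem ConnectivityGE.hasLinkage (hfin : G.edgeSet.Finite) (h : ConnectivityGE G W S T k) :
    HasLinkage G W S T k := by
  classical
  induction hn : G.edgeSet.ncard generalizing G S T with
  | zero =>
    obtain rfl : G = ⊥ := SimpleGraph.edgeSet_eq_empty.1 ((Set.ncard_eq_zero hfin).1 hn)
    exact h.hasLinkage_bot
  | succ n ih =>
    obtain ⟨e, he⟩ : G.edgeSet.Nonempty := (Set.ncard_pos hfin).1 (by omega)
    have hle : G.deleteEdges {e} ≤ G := G.deleteEdges_le _
    have hfin' : (G.deleteEdges {e}).edgeSet.Finite :=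
      hfin.subset (SimpleGraph.edgeSet_mono hle)
    have hn' : (G.deleteEdges {e}).edgeSet.ncard = n := by
      rw [G.edgeSet_deleteEdges, Set.ncard_sdiff_singleton_of_mem he, hn, Nat.add_sub_cancel]
    by_cases hconn : ConnectivityGE (G.deleteEdges {e}) W S T k
    · exact (ih hfin' hconn hn').mono_graph hle
    obtain ⟨X, hXk, hX⟩ : ∃ X : Finset V, X.card < k ∧
        ¬ Linked (G.deleteEdges {e}) (W \ X) S T := by
      simpa only [ConnectivityGE, not_forall, exists_prop] using hconn
    obtain ⟨x, y, rfl, hxy, hx, hy⟩ := (h X hXk).exists_eq_of_not_linked_deleteEdges hX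
    have hS := ih hfin' (h.insert_of_deleteEdges hX hy) hn'
    rw [Sym2.eq_swap] at hX hx hfin' hn'
    have hT := ih hfin' (h.symm.insert_of_deleteEdges (mt Linked.symm hX) hx.symm) hn'
    rw [Sym2.eq_swap] at hX hx hT
    exact .glue hle hxy hXk hX hx hy hS hT

end Menger

section TightPath

/-- The degree of `v` in the graph obtained from `G[P]` by adding one new vertex adjacent to all of
`S` and another one adjacent to all of `T`. -/
noncomputable def weight {V : Type*} (G : SimpleGraph V) (S T P : Set V) (v : V) : ℕ :=
  (G.neighborSet v ∩ P).ncard + S.indicator 1 v + T.indicator 1 v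

theorem ncard_consecutive_add {i n : ℕ} (hi : i ≤ n) :
    {j | j ≤ n ∧ (j = i + 1 ∨ j + 1 = i)}.ncard + (if i = 0 then 1 else 0) +
      (if i = n then 1 else 0) = 2 := by
  have hset : {j | j ≤ n ∧ (j = i + 1 ∨ j + 1 = i)} =
      (if i = 0 then ∅ else {i - 1}) ∪ (if i = n then ∅ else {i + 1}) := by
    ext j
    split_ifs <;> grind
  rw [hset, Set.ncard_union_eq (by split_ifs <;> simp) (by split_ifs <;> simp)
    (by split_ifs <;> simp)]
  split_ifs <;> simp

section

variable {V : Type*} {G : SimpleGraph V} {A S T : Set V} {u v : V} {w : G.Walk u v}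

theorem IsShortestLink.neighborSet_getVert_inter_support (h : IsShortestLink A S T w) {i : ℕ}
    (hi : i ≤ w.length) : G.neighborSet (w.getVert i) ∩ {z | z ∈ w.support} =
      w.getVert '' {j | j ≤ w.length ∧ (j = i + 1 ∨ j + 1 = i)} := by
  ext z
  constructor
  · rintro ⟨hadj, hz⟩
    obtain ⟨j, rfl, hj⟩ := SimpleGraph.Walk.mem_support_iff_exists_getVert.1 hz
    exact ⟨j, ⟨hj, (h.adj_getVert_iff hi hj).1 hadj⟩, rfl⟩
  · rintro ⟨j, ⟨hj, hij⟩, rfl⟩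
    exact ⟨(h.adj_getVert_iff hi hj).2 hij, w.getVert_mem_support j⟩

theorem IsShortestLink.weight_eq_two (h : IsShortestLink A S T w) :
    ∀ z ∈ w.support, weight G S T {z | z ∈ w.support} z = 2 := by
  classical
  intro z hz
  obtain ⟨i, rfl, hi⟩ := SimpleGraph.Walk.mem_support_iff_exists_getVert.1 hz
  have hinj : Set.InjOn w.getVert {j | j ≤ w.length ∧ (j = i + 1 ∨ j + 1 = i)} :=
    h.isPath.getVert_injOn.mono fun j hj => hj.1
  rw [weight, h.neighborSet_getVert_inter_support hi, hinj.ncard_image,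
    ← ncard_consecutive_add hi]
  simp only [Set.indicator_apply, h.getVert_mem_left_iff hi, h.getVert_mem_right_iff hi,
    Pi.one_apply]

theorem weight_le_weight {P W : Set V} (hfin : (G.neighborSet v).Finite)
    (h : G.neighborSet v ∩ W ⊆ P) : weight G S T W v ≤ weight G S T P v := by
  simp only [weight, Nat.add_le_add_iff_right]
  exact Set.ncard_le_ncard (Set.subset_inter Set.inter_subset_left h)
    (hfin.subset Set.inter_subset_left)

theorem neighborSet_inter_subset_of_weight_le {P W : Set V} (hfin : (G.neighborSet v).Finite)
    (hPW : P ⊆ W) (h : weight G S T W v ≤ weight G S T P v) : G.neighborSet v ∩ W ⊆ P := by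
  have hle : (G.neighborSet v ∩ W).ncard ≤ (G.neighborSet v ∩ P).ncard := by
    simpa only [weight, Nat.add_le_add_iff_right] using h
  rw [← Set.eq_of_subset_of_ncard_le (Set.inter_subset_inter_right _ hPW) hle
    (hfin.subset Set.inter_subset_left)]
  exact Set.inter_subset_right

end

variable {V : Type} {G : SimpleGraph V} {A B P S T W : Set V} {k : ℕ}

theorem IsSTPath.linked (h : IsSTPath G S T P) : Linked G P S T := by
  obtain ⟨u, v, w, -, hu, hv, rfl⟩ := h
  exact ⟨u, hu, v, hv, w, fun _ hz => hz⟩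

/-- `P` is the vertex set of a path between `S` and `T` that is induced and meets each of `S` and
`T` only in an end; both conditions are expressed by the value of `weight`. -/
def IsTightPath (G : SimpleGraph V) (S T P : Set V) : Prop :=
  IsSTPath G S T P ∧ ∀ v ∈ P, weight G S T P v = 2

theorem Linked.exists_isTightPath (h : Linked G A S T) : ∃ P ⊆ A, IsTightPath G S T P := by
  obtain ⟨u, v, w, hw⟩ := h.exists_isShortestLink
  exact ⟨_, hw.support_subset, ⟨u, v, w, hw.isPath, hw.left_mem, hw.right_mem, rfl⟩,
    hw.weight_eq_two⟩

theorem setDistGE_two (hdisj : Disjoint A B) (hadj : ∀ v ∈ A, Disjoint (G.neighborSet v) B) :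
    SetDistGE G A B 2 := by
  rintro x y hx hy (_ | ⟨h, _ | ⟨h', w⟩⟩)
  · exact absurd hy (Set.disjoint_left.1 hdisj hx)
  · exact absurd hy (Set.disjoint_left.1 (hadj x hx) h)
  · simp

theorem HasLinkage.hasKPaths (hfin : ∀ v, (G.neighborSet v).Finite)
    (hW : ∀ v ∈ W, weight G S T W v ≤ 2) (h : HasLinkage G W S T k) : HasKPaths G S T k 2 := by
  obtain ⟨A, hdisj, hA⟩ := h
  choose P hPA hP using fun i => (hA i).2.exists_isTightPath
  refine ⟨P, fun i => (hP i).1, fun i j hij => ?_⟩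
  have hPdisj : Disjoint (P i) (P j) := (hdisj hij).mono (hPA i) (hPA j)
  refine setDistGE_two hPdisj fun v hv => Set.disjoint_left.2 fun u hadj hu => ?_
  have hPW : ∀ l, P l ⊆ W := fun l => (hPA l).trans (hA l).1
  have hnbr : G.neighborSet v ∩ W ⊆ P i := neighborSet_inter_subset_of_weight_le (hfin v) (hPW i)
    ((hW v (hPW i hv)).trans_eq ((hP i).2 v hv).symm)
  exact Set.disjoint_left.1 hPdisj (hnbr ⟨hadj, hPW j hu⟩) hu

end TightPath

section Contraction

variable {V V' : Type*} {G : SimpleGraph V} {f : V → V'} {A W S T : Set V} {B : Set V'} {u v : V}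

/-- The graph obtained from `G[W]` by identifying vertices with the same image under `f`. It is used
when the fibres of `f` are connected in `G[W]`, so that it is a contraction of `G[W]`. -/
def contract (G : SimpleGraph V) (W : Set V) (f : V → V') : SimpleGraph V' :=
  (G.induce W).map fun u : W => f u

theorem contract_adj {a b : V'} : (contract G W f).Adj a b ↔
    a ≠ b ∧ ∃ u ∈ W, ∃ v ∈ W, G.Adj u v ∧ f u = a ∧ f v = b := by
  rw [contract, SimpleGraph.map_adj']
  simp only [SimpleGraph.comap_adj, Function.Embedding.subtype_apply, Subtype.exists, exists_prop,
    ne_eq]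

theorem finite_edgeSet_contract (hW : W.Finite) : (contract G W f).edgeSet.Finite := by
  refine ((hW.prod hW).image fun p => s(f p.1, f p.2)).subset fun e he => ?_
  induction e with
  | h a b =>
    obtain ⟨-, u, hu, v, hv, -, rfl, rfl⟩ := contract_adj.1 he
    exact ⟨(u, v), ⟨hu, hv⟩, rfl⟩

theorem Linked.map_contract (h : Linked G A S T) (hA : A ⊆ W) :
    Linked (contract G W f) (f '' A) (f '' S) (f '' T) := by
  obtain ⟨u, hu, v, hv, w, hw⟩ := h
  suffices Linked (contract G W f) (f '' A) {f u} {f v} from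
    this.mono subset_rfl (by simpa using ⟨u, hu, rfl⟩) (by simpa using ⟨v, hv, rfl⟩)
  clear hu hv
  induction w with
  | nil => exact .refl ⟨_, hw _ (by simp), rfl⟩
  | @cons a b c hadj w ih =>
    have ha : a ∈ A := hw a (by simp)
    have hb : b ∈ A := hw b (by simp)
    have hab : Linked (contract G W f) (f '' A) {f a} {f b} := by
      by_cases heq : f a = f b
      · exact heq ▸ .refl ⟨a, ha, rfl⟩
      · exact .of_adj ⟨a, ha, rfl⟩ ⟨b, hb, rfl⟩
          (contract_adj.2 ⟨heq, a, hA ha, b, hA hb, hadj, rfl, rfl⟩)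
    exact hab.trans (ih fun z hz => hw z (by simp [hz]))

theorem Linked.of_contract
    (hf : ∀ u ∈ W, ∀ v ∈ W, f u = f v → Linked G (W ∩ f ⁻¹' {f u}) {u} {v})
    (h : Linked (contract G W f) B (f '' (S ∩ W)) (f '' (T ∩ W))) :
    Linked G (W ∩ f ⁻¹' B) S T := by
  obtain ⟨_, ⟨u, ⟨huS, huW⟩, hu⟩, _, ⟨v, ⟨hvT, hvW⟩, hv⟩, w, hw⟩ := h
  suffices Linked G (W ∩ f ⁻¹' B) {u} {v} from
    this.mono subset_rfl (by simpa using huS) (by simpa using hvT)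
  have fibre : ∀ u ∈ W, ∀ v ∈ W, f u = f v → f u ∈ B → Linked G (W ∩ f ⁻¹' B) {u} {v} :=
    fun u hu v hv huv huB => (hf u hu v hv huv).mono_set
      (Set.inter_subset_inter_right _ (Set.preimage_mono (Set.singleton_subset_iff.2 huB)))
  clear huS hvT
  induction w generalizing u with
  | nil => exact fibre u huW v hvW (hu.trans hv.symm) (hu ▸ hw _ (by simp))
  | cons hadj w ih =>
    obtain ⟨-, a, ha, b, hb, hab, rfl, rfl⟩ := contract_adj.1 hadj
    have hua := fibre u huW a ha hu (hu ▸ hw _ (by simp))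
    have hbv := ih b rfl hb hv fun z hz => hw z (by simp [hz])
    exact hua.trans ((of_adj hua.right_mem hbv.symm.right_mem hab).trans hbv)

theorem ConnectivityGE.map_contract {N : V' → Finset V} {d m : ℕ} (hd : 0 < d)
    (hN : ∀ a, (N a).card ≤ d) (hfN : ∀ u ∈ W, u ∈ N (f u)) (h : ConnectivityGE G W S T (d * m)) :
    ConnectivityGE (contract G W f) (f '' W) (f '' (S ∩ W)) (f '' (T ∩ W)) m := by
  classical
  intro X hX
  have hcard : (X.biUnion N).card < d * m := calc
    (X.biUnion N).card ≤ X.card * d := Finset.card_biUnion_le_card_mul X N d fun a _ => hN a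
    _ < m * d := Nat.mul_lt_mul_of_pos_right hX hd
    _ = d * m := Nat.mul_comm m d
  refine ((h _ hcard).inter_ends.map_contract Set.sdiff_subset).mono ?_ ?_ ?_
  · rintro _ ⟨u, ⟨huW, huX⟩, rfl⟩
    exact ⟨⟨u, huW, rfl⟩, fun hfu => huX (Finset.mem_biUnion.2 ⟨f u, hfu, hfN u huW⟩)⟩
  all_goals exact Set.image_mono (Set.inter_subset_inter_right _ Set.sdiff_subset)

theorem ConnectivityGE.exists_disjoint_images {N : V' → Finset V} {d m : ℕ} (hd : 0 < d)
    (hW : W.Finite) (hf : ∀ u ∈ W, ∀ v ∈ W, f u = f v → Linked G (W ∩ f ⁻¹' {f u}) {u} {v})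
    (hN : ∀ a, (N a).card ≤ d) (hfN : ∀ u ∈ W, u ∈ N (f u)) (h : ConnectivityGE G W S T (d * m)) :
    ∃ A : Fin m → Set V, (∀ i, A i ⊆ W ∧ Linked G (A i) S T) ∧
      ∀ i j, i ≠ j → ∀ u ∈ A i, ∀ v ∈ A j, f u ≠ f v := by
  obtain ⟨B, hdisj, hB⟩ := (h.map_contract hd hN hfN).hasLinkage (finite_edgeSet_contract hW)
  refine ⟨fun i => W ∩ f ⁻¹' B i, fun i => ⟨Set.inter_subset_left, .of_contract hf (hB i).2⟩, ?_⟩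
  exact fun i j hij u hu v hv => (hdisj hij).ne_of_mem hu.2 hv.2

theorem ConnectivityGE.hasLinkage_of_finite {m : ℕ} (hW : W.Finite)
    (h : ConnectivityGE G W S T m) : HasLinkage G W S T m := by
  obtain ⟨A, hA, himage⟩ := (one_mul m ▸ h).exists_disjoint_images (f := id) (N := singleton)
    one_pos hW (by rintro u hu _ _ rfl; exact .refl ⟨hu, rfl⟩) (by simp) (by simp)
  exact ⟨A, fun i j hij => Set.disjoint_left.2 fun v hi hj => himage i j hij v hi v hj rfl, hA⟩

end Contraction

section Packing

theorem exists_collapse_of_pairwiseDisjoint {V : Type*} {N : V → Finset V} {K : Set V}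
    (hK : K.PairwiseDisjoint N) :
    ∃ f : V → V, (∀ v ∈ K, ∀ u ∈ N v, f u = v) ∧ ∀ u, f u = u ∨ f u ∈ K ∧ u ∈ N (f u) := by
  have hf : ∀ u, ∃ a, (∀ v ∈ K, u ∈ N v → a = v) ∧ (a = u ∨ a ∈ K ∧ u ∈ N a) := by
    intro u
    by_cases hu : ∃ v ∈ K, u ∈ N v
    · obtain ⟨v, hv, huv⟩ := hu
      refine ⟨v, fun v' hv' huv' => ?_, .inr ⟨hv, huv⟩⟩
      by_contra hne
      exact Finset.disjoint_left.1 (hK hv hv' hne) huv huv'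
    · exact ⟨u, fun v hv huv => absurd ⟨v, hv, huv⟩ hu, .inl rfl⟩
  choose f hfK hf using hf
  exact ⟨f, fun v hv u huv => hfK u v hv huv, hf⟩

section

variable {V : Type*} [DecidableEq V] {G : SimpleGraph V} [G.LocallyFinite] {u v : V}

/-- The closed neighbourhood of `v`: the vertex `v` together with its neighbours. -/
def closedNbhd (G : SimpleGraph V) [G.LocallyFinite] (v : V) : Finset V :=
  insert v (G.neighborFinset v)

theorem mem_closedNbhd : u ∈ closedNbhd G v ↔ u = v ∨ G.Adj v u := by
  simp [closedNbhd]

theorem mem_closedNbhd_comm : u ∈ closedNbhd G v ↔ v ∈ closedNbhd G u := by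
  rw [mem_closedNbhd, mem_closedNbhd, eq_comm, G.adj_comm]

theorem card_closedNbhd (v : V) : (closedNbhd G v).card = G.degree v + 1 :=
  Finset.card_insert_of_notMem (by simp)

end

variable {V : Type} [DecidableEq V] {G : SimpleGraph V} [G.LocallyFinite] {W S T K : Set V}

theorem ConnectivityGE.exists_tightPaths_of_packing {Δ m : ℕ} (hΔ : ∀ v, G.degree v ≤ Δ)
    (hW : W.Finite) (hK : K.PairwiseDisjoint (closedNbhd G))
    (h : ConnectivityGE G W S T ((Δ + 1) * m)) :
    ∃ P : Fin m → Set V, (∀ i, P i ⊆ W ∧ IsTightPath G S T (P i)) ∧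
      Pairwise (Function.onFun Disjoint P) ∧
      ∀ i j, i ≠ j → ∀ v ∈ P i, v ∈ K → Disjoint (G.neighborSet v) (P j) := by
  obtain ⟨f, hfK, hf⟩ := exists_collapse_of_pairwiseDisjoint
    (hK.subset (Set.inter_subset_left (t := W)))
  have hfN : ∀ u, u ∈ closedNbhd G (f u) := fun u =>
    (hf u).elim (fun hu => mem_closedNbhd.2 (.inl hu.symm)) And.right
  have f_self : ∀ u ∈ K ∩ W, f u = u := fun u hu => hfK u hu u (mem_closedNbhd.2 (.inl rfl))
  have to_centre : ∀ u ∈ W, Linked G (W ∩ f ⁻¹' {f u}) {u} {f u} := by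
    intro u hu
    by_cases hfu : f u = u
    · rw [hfu]
      exact .refl ⟨hu, hfu⟩
    · obtain ⟨hfuK, huN⟩ := (hf u).resolve_left hfu
      have hadj : G.Adj u (f u) := ((mem_closedNbhd.1 huN).resolve_left (Ne.symm hfu)).symm
      exact .of_adj ⟨hu, rfl⟩ ⟨hfuK.2, f_self _ hfuK⟩ hadj
  have fibre : ∀ u ∈ W, ∀ v ∈ W, f u = f v → Linked G (W ∩ f ⁻¹' {f u}) {u} {v} :=
    fun u hu v hv huv => (to_centre u hu).trans (huv ▸ (to_centre v hv).symm)
  obtain ⟨A, hA, himage⟩ := h.exists_disjoint_images Δ.succ_pos hW fibre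
    (fun v => (card_closedNbhd v).trans_le (Nat.succ_le_succ (hΔ v))) fun u _ => hfN u
  choose P hPA hP using fun i => (hA i).2.exists_isTightPath
  refine ⟨P, fun i => ⟨(hPA i).trans (hA i).1, hP i⟩, fun i j hij => ?_,
    fun i j hij v hv hvK => ?_⟩
  · exact Set.disjoint_left.2 fun v hvi hvj => himage i j hij v (hPA i hvi) v (hPA j hvj) rfl
  · refine Set.disjoint_left.2 fun u hadj hu => ?_
    have hvW : v ∈ K ∩ W := ⟨hvK, (hA i).1 (hPA i hv)⟩
    exact himage i j hij v (hPA i hv) u (hPA j hu)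
      ((f_self v hvW).trans (hfK v hvW u (mem_closedNbhd.2 (.inr hadj))).symm)

theorem ConnectivityGE.exists_weight_le_of_packing {Δ n : ℕ} (hΔ : ∀ v, G.degree v ≤ Δ)
    (hW : W.Finite) (hK : K.PairwiseDisjoint (closedNbhd G))
    (h : ConnectivityGE G W S T ((Δ + 1) * n)) :
    ∃ W' ⊆ W, ConnectivityGE G W' S T n ∧ ∀ v ∈ W' ∩ K, weight G S T W' v ≤ 2 := by
  obtain ⟨P, hP, hdisj, hsep⟩ := h.exists_tightPaths_of_packing hΔ hW hK
  have hlink : HasLinkage G (⋃ i, P i) S T n :=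
    ⟨P, hdisj, fun i => ⟨Set.subset_iUnion P i, (hP i).2.1.linked⟩⟩
  refine ⟨⋃ i, P i, Set.iUnion_subset fun i => (hP i).1, hlink.connectivityGE, ?_⟩
  rintro v ⟨hv, hvK⟩
  obtain ⟨i, hvi⟩ := Set.mem_iUnion.1 hv
  refine (weight_le_weight (G.neighborSet v).toFinite ?_).trans_eq ((hP i).2.2 v hvi)
  rintro u ⟨hadj, hu⟩
  obtain ⟨j, huj⟩ := Set.mem_iUnion.1 hu
  obtain rfl : i = j := by
    by_contra hij
    exact Set.disjoint_left.1 (hsep i j hij v hvi hvK) hadj huj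
  exact huj

theorem ConnectivityGE.exists_weight_le_of_packings {Δ n : ℕ} {K : ℕ → Set V}
    (hΔ : ∀ v, G.degree v ≤ Δ) (hW : W.Finite) (hK : ∀ i, (K i).PairwiseDisjoint (closedNbhd G))
    {m : ℕ} (h : ConnectivityGE G W S T ((Δ + 1) ^ m * n)) :
    ∃ W' ⊆ W, ConnectivityGE G W' S T n ∧
      ∀ i < m, ∀ v ∈ W' ∩ K i, weight G S T W' v ≤ 2 := by
  induction m generalizing n with
  | zero => exact ⟨W, subset_rfl, by simpa using h, by simp⟩
  | succ m ih =>
    rw [pow_succ, mul_assoc] at h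
    obtain ⟨W₁, hW₁, hconn₁, hwt₁⟩ := ih h
    obtain ⟨W₂, hW₂, hconn₂, hwt₂⟩ :=
      hconn₁.exists_weight_le_of_packing hΔ (hW.subset hW₁) (hK m)
    refine ⟨W₂, hW₂.trans hW₁, hconn₂, fun i hi v hv => ?_⟩
    rcases Nat.lt_succ_iff_lt_or_eq.1 hi with hlt | rfl
    · have hmono : weight G S T W₂ v ≤ weight G S T W₁ v :=
        weight_le_weight (G.neighborSet v).toFinite (Set.inter_subset_right.trans hW₂)
      exact hmono.trans (hwt₁ i hlt v ⟨hW₂ hv.1, hv.2⟩)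
    · exact hwt₂ v hv

theorem exists_coloring_pairwiseDisjoint {α : Type*} {N : α → Finset α} {d : ℕ}
    (hsymm : ∀ a b, a ∈ N b → b ∈ N a) (hN : ∀ a, (N a).card ≤ d) (W : Finset α) :
    ∃ c : α → ℕ, (∀ a, c a < d ^ 2 + 1) ∧ ∀ j, {a ∈ (W : Set α) | c a = j}.PairwiseDisjoint N := by
  classical
  induction W using Finset.induction_on with
  | empty => exact ⟨fun _ => 0, fun _ => Nat.succ_pos _, by simp⟩
  | insert a W _ ih =>
    obtain ⟨c, hc, hdisj⟩ := ih
    let forbidden := ((N a).biUnion N).image c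
    have hcard : forbidden.card < (Finset.range (d ^ 2 + 1)).card := by
      rw [Finset.card_range, Nat.lt_succ_iff]
      calc forbidden.card ≤ ((N a).biUnion N).card := Finset.card_image_le
        _ ≤ (N a).card * d := Finset.card_biUnion_le_card_mul _ _ _ fun b _ => hN b
        _ ≤ d * d := Nat.mul_le_mul_right d (hN a)
        _ = d ^ 2 := (sq d).symm
    obtain ⟨j, hj, hjforb⟩ := Finset.exists_mem_notMem_of_card_lt_card hcard
    have new_disj : ∀ b, c b = j → Disjoint (N a) (N b) := fun b hb =>
      Finset.disjoint_left.2 fun x hxa hxb => hjforb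
        (Finset.mem_image.2 ⟨b, Finset.mem_biUnion.2 ⟨x, hxa, hsymm x b hxb⟩, hb⟩)
    refine ⟨Function.update c a j, fun b => ?_, fun i b hb b' hb' hne => ?_⟩
    · rcases eq_or_ne b a with rfl | hba
      · simpa using hj
      · simpa [hba] using hc b
    · simp only [Finset.coe_insert, Set.mem_ofPred_eq, Set.mem_insert_iff, Finset.mem_coe] at hb hb'
      rcases eq_or_ne a b with rfl | hab <;> rcases eq_or_ne a b' with rfl | hab'
      · exact absurd rfl hne
      · exact new_disj b' (by simpa [hab'.symm, ← hb.2] using hb'.2)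
      · exact (new_disj b (by simpa [hab.symm, ← hb'.2] using hb.2)).symm
      · exact hdisj i (by simpa [hab.symm] using hb) (by simpa [hab'.symm] using hb') hne

end Packing

theorem exists_transversal_of_forall_finite {α : Type*} {n : ℕ} {F : Set (Finset α)}
    (h : ∀ 𝒢 : Finset (Finset α), ↑𝒢 ⊆ F →
      ∃ X : Finset α, X.card ≤ n ∧ ∀ e ∈ 𝒢, ¬ Disjoint e X) :
    ∃ X : Finset α, X.card ≤ n ∧ ∀ e ∈ F, ¬ Disjoint e X := by
  classical
  induction n generalizing F with
  | zero =>
    refine ⟨∅, le_rfl, fun e he => ?_⟩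
    obtain ⟨X, hX, hmeet⟩ := h {e} (by simpa using he)
    simp [Finset.card_eq_zero.1 (Nat.le_zero.1 hX)] at hmeet
  | succ n ih =>
    obtain rfl | ⟨e, he⟩ := F.eq_empty_or_nonempty
    · exact ⟨∅, by simp, by simp⟩
    -- If a finite subfamily rules out each `v ∈ e`, their union with `{e}` has no transversal.
    suffices ∃ v ∈ e, ∀ 𝒢 : Finset (Finset α), ↑𝒢 ⊆ {f ∈ F | v ∉ f} →
        ∃ X : Finset α, X.card ≤ n ∧ ∀ f ∈ 𝒢, ¬ Disjoint f X by
      obtain ⟨v, -, hv⟩ := this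
      obtain ⟨X, hX, hmeet⟩ := ih hv
      refine ⟨insert v X, (Finset.card_insert_le v X).trans (Nat.succ_le_succ hX), fun f hf => ?_⟩
      rw [Finset.disjoint_insert_right, not_and_or, not_not]
      exact or_iff_not_imp_left.2 fun hvf => hmeet f ⟨hf, hvf⟩
    by_contra! hbad
    choose! 𝒢 h𝒢F h𝒢 using hbad
    obtain ⟨X, hX, hmeet⟩ := h (insert e (e.biUnion 𝒢)) <| by
      rw [Finset.coe_insert, Finset.coe_biUnion]
      exact Set.insert_subset he (Set.iUnion₂_subset fun v hv f hf => (h𝒢F v hv hf).1)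
    obtain ⟨v, hve, hvX⟩ := Finset.not_disjoint_iff.1 (hmeet e (Finset.mem_insert_self _ _))
    obtain ⟨f, hf, hdisj⟩ := h𝒢 v hve (X.erase v) (by rw [Finset.card_erase_of_mem hvX]; omega)
    refine hmeet f (Finset.mem_insert_of_mem (Finset.mem_biUnion.2 ⟨v, hve, hf⟩)) ?_
    rwa [← Finset.erase_eq_of_notMem (h𝒢F v hve hf).2, Finset.disjoint_erase_comm]

section BoundedDegree

variable {V : Type} {G : SimpleGraph V} [G.LocallyFinite] {S T : Set V}

theorem ConnectivityGE.hasKPaths {Δ k : ℕ} {W : Finset V} (hΔ : ∀ v, G.degree v ≤ Δ)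
    (h : ConnectivityGE G W S T ((Δ + 1) ^ ((Δ + 1) ^ 2 + 1) * k)) :
    HasKPaths G S T k 2 := by
  classical
  obtain ⟨c, hc, hdisj⟩ := exists_coloring_pairwiseDisjoint (N := closedNbhd G) (d := Δ + 1)
    (fun _ _ => mem_closedNbhd_comm.1)
    (fun v => (card_closedNbhd v).trans_le (Nat.succ_le_succ (hΔ v))) W
  obtain ⟨W', hW', hconn, hwt⟩ := h.exists_weight_le_of_packings hΔ W.finite_toSet hdisj
  refine (hconn.hasLinkage_of_finite (W.finite_toSet.subset hW')).hasKPaths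
    (fun v => (G.neighborSet v).toFinite) fun v hv => ?_
  exact hwt (c v) (hc v) v ⟨hv, hW' hv, rfl⟩

theorem exists_separator_of_not_hasKPaths {Δ k : ℕ} (hΔ : ∀ v, G.degree v ≤ Δ)
    (h : ¬ HasKPaths G S T k 2) :
    ∃ X : Finset V, X.card ≤ (Δ + 1) ^ ((Δ + 1) ^ 2 + 1) * k ∧
      ∀ (u v : V) (w : G.Walk u v), u ∈ S → v ∈ T → ∃ y ∈ w.support, y ∈ X := by
  classical
  let walkSupports : Set (Finset V) :=
    {e | ∃ u ∈ S, ∃ v ∈ T, ∃ w : G.Walk u v, w.support.toFinset = e}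
  suffices ∀ 𝒢 : Finset (Finset V), ↑𝒢 ⊆ walkSupports → ∃ X : Finset V,
      X.card ≤ (Δ + 1) ^ ((Δ + 1) ^ 2 + 1) * k ∧ ∀ e ∈ 𝒢, ¬ Disjoint e X by
    obtain ⟨X, hX, hmeet⟩ := exists_transversal_of_forall_finite this
    refine ⟨X, hX, fun u v w hu hv => ?_⟩
    simpa only [Finset.not_disjoint_iff, List.mem_toFinset] using hmeet _ ⟨u, hu, v, hv, w, rfl⟩
  intro 𝒢 h𝒢
  by_contra! hsep
  refine h (ConnectivityGE.hasKPaths (W := 𝒢.biUnion id) hΔ fun X hX => ?_)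
  obtain ⟨e, he, hdisj⟩ := hsep X hX.le
  obtain ⟨u, hu, v, hv, w, rfl⟩ := h𝒢 he
  refine ⟨u, hu, v, hv, w, fun z hz => ⟨?_, ?_⟩⟩
  · exact Finset.mem_biUnion.2 ⟨_, he, List.mem_toFinset.2 hz⟩
  · exact Finset.disjoint_left.1 hdisj (List.mem_toFinset.2 hz)

end BoundedDegree

/-- Bounded degree induced Menger (Theorem 4.1). -/
theorem stmt_14 (Δ : ℕ) (hΔ : 1 ≤ Δ) :
    ∃ C : ℕ, 0 < C ∧ ∀ (V : Type) (G : SimpleGraph V),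
      (∀ v : V, (G.neighborSet v).Finite ∧ (G.neighborSet v).ncard ≤ Δ) →
      ∀ k : ℕ, 1 ≤ k → ∀ S T : Set V,
        HasKPaths G S T k 2 ∨
        ∃ X : Finset V, X.card ≤ k * C ∧
          ∀ (u v : V) (w : G.Walk u v), w.IsPath → u ∈ S → v ∈ T →
            ∃ y ∈ w.support, y ∈ X := by
  refine ⟨(Δ + 1) ^ ((Δ + 1) ^ 2 + 1), Nat.pow_pos Δ.succ_pos, fun V G hdeg k _ S T =>
    or_iff_not_imp_left.2 fun hno => ?_⟩
  let : G.LocallyFinite := fun v => (hdeg v).1.fintype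
  have hdegree : ∀ v, G.degree v ≤ Δ := fun v =>
    (Set.ncard_eq_toFinset_card' (G.neighborSet v)).symm.trans_le (hdeg v).2
  obtain ⟨X, hX, hsep⟩ := exists_separator_of_not_hasKPaths hdegree hno
  exact ⟨X, hX.trans_eq (Nat.mul_comm _ k), fun u v w _ => hsep u v w⟩
end
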